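/- arXiv:2305.15877 — 2 statements merged into one kernel-verified Lean document; each statement's English description precedes it below -/
import Mathlib

section
/- (Oracle inequality) Let λ > 0, n ≥ 1, δ ∈ (0,1), α ∈ [0,1], and let P be a fixed prior on H. Define the objective F(Q) = R̂_n^α(π_Q) + √(KL1(π_Q)/(2n)) + B_n^α(π_Q) + KL2(π_Q)/(nλ) + (λ/2)·V̄_n^α(π_Q). Suppose Q̂_n is a probability distribution on H minimizing F over all probability distributions on H, and Q_* is a probability distribution on H minimizing the risk Q ↦ R(π_Q) over all probability distributions on H. Then with probability at least 1−δ over draws of D_n: R(π_{Q̂_n}) ≤ R(π_{Q_*}) + 2√(KL1(π_{Q_*})/(2n)) + 2B_n^α(π_{Q_*}) + 2KL2(π_{Q_*})/(nλ) + λ·V̄_n^α(π_{Q_*}). -/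
open MeasureTheory ProbabilityTheory Real

open Classical in
/-- Kullback–Leibler divergence between two measures, valued in `ℝ≥0∞` (junk value `⊤` when
`Q` is not absolutely continuous w.r.t. `P` or the log-likelihood ratio is not integrable). -/
noncomputable def klDiv {α : Type*} [MeasurableSpace α] (Q P : Measure α) : ENNReal :=
  if Q ≪ P ∧ Integrable (llr Q P) Q then ENNReal.ofReal (∫ x, llr Q P x ∂Q) else ⊤

lemma dv_ineq {H : Type*} [MeasurableSpace H] (P Q : Measure H) [IsProbabilityMeasure P]
    [IsProbabilityMeasure Q] (hkl : klDiv Q P ≠ ⊤) (f : H → ℝ) (hf : Measurable f)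
    (C : ℝ) (hC : ∀ h, |f h| ≤ C) :
    ∫ h, f h ∂Q ≤ (klDiv Q P).toReal + Real.log (∫ h, Real.exp (f h) ∂P) := by
  have hac : Q ≪ P ∧ Integrable (llr Q P) Q := by
    by_contra hcon
    exact hkl (by simp [klDiv, hcon])
  have hkle : ∫ x, llr Q P x ∂Q ≤ (klDiv Q P).toReal := by
    unfold klDiv
    rw [if_pos hac]
    rw [ENNReal.toReal_ofReal']
    exact le_max_left _ _
  have hfQ : Integrable f Q :=
    Integrable.of_bound hf.aestronglyMeasurable C (ae_of_all _ fun h => by simpa using hC h)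
  have hfP : Integrable (fun h => Real.exp (f h)) P :=
    Integrable.of_bound (by fun_prop) (Real.exp C) (ae_of_all _ fun h => by
      simpa using (abs_le.1 (hC h)).2)
  have := isProbabilityMeasure_tilted hfP
  have h1 := InformationTheory.integral_llr_add_sub_measure_univ_nonneg
    (hac.1.trans (absolutelyContinuous_tilted hfP))
    (integrable_llr_tilted_right hac.1 hfQ hac.2 hfP)
  rw [integral_llr_tilted_right hac.1 hfQ hfP hac.2] at h1
  simp at h1
  linarith

lemma lint_pi {Z : Type*} [MeasurableSpace Z] (μ : Measure Z) [IsProbabilityMeasure μ] (n : ℕ)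
    (g : Z → ℝ) (hg : Measurable g) (h1 : ∫⁻ z, ENNReal.ofReal (Real.exp (g z)) ∂μ ≤ 1) :
    ∫⁻ ω, ENNReal.ofReal (Real.exp (∑ i : Fin n, g (ω i))) ∂(Measure.pi fun _ : Fin n => μ) ≤ 1 := by
  have hi : iIndepFun (fun (i : Fin n) (ω : Fin n → Z) => ENNReal.ofReal (Real.exp (g (ω i))))
      (Measure.pi fun _ : Fin n => μ) :=
    iIndepFun_pi (X := fun _ z => ENNReal.ofReal (Real.exp (g z))) (fun i => by fun_prop)
  have h2 : ∀ ω : Fin n → Z, ENNReal.ofReal (Real.exp (∑ i : Fin n, g (ω i)))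
      = ∏ i, ENNReal.ofReal (Real.exp (g (ω i))) := by
    intro ω
    rw [Real.exp_sum, ENNReal.ofReal_prod_of_nonneg (fun i _ => (Real.exp_pos _).le)]
  simp_rw [h2]
  rw [lintegral_prod_eq_prod_lintegral_of_indepFun Finset.univ _ hi (fun i => by fun_prop)]
  apply Finset.prod_le_one'
  intro i _
  have hm := measurePreserving_eval (fun _ : Fin n => μ) i
  have := hm.lintegral_comp (f := fun z => ENNReal.ofReal (Real.exp (g z))) (by fun_prop)
  simp only [Function.eval] at this
  rw [this]
  exact h1

lemma markov_bad {Ω : Type*} [MeasurableSpace Ω] (μ : Measure Ω) (Φ : Ω → ENNReal)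
    (hΦ : Measurable Φ) (h1 : ∫⁻ ω, Φ ω ∂μ ≤ 1) (β : ℝ) (hβ : 0 < β) :
    ∃ B : Set Ω, MeasurableSet B ∧ μ B ≤ ENNReal.ofReal β ∧
      ∀ ω, ω ∉ B → Φ ω < ENNReal.ofReal (1 / β) := by
  refine ⟨{ω | ENNReal.ofReal (1 / β) ≤ Φ ω}, measurableSet_le measurable_const hΦ, ?_, ?_⟩
  · have hp : ENNReal.ofReal (1 / β) ≠ 0 := by simpa using hβ
    refine (meas_ge_le_lintegral_div hΦ.aemeasurable hp ENNReal.ofReal_ne_top).trans ?_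
    refine (ENNReal.div_le_div_right h1 _).trans ?_
    rw [one_div, one_div, ENNReal.ofReal_inv_of_pos hβ, inv_inv]
  · intro ω hω
    simpa using hω

lemma single_bad {Z : Type*} [MeasurableSpace Z] (μ : Measure Z) [IsProbabilityMeasure μ] (n : ℕ)
    (g : Z → ℝ) (hg : Measurable g) (h1 : ∫⁻ z, ENNReal.ofReal (Real.exp (g z)) ∂μ ≤ 1)
    (β : ℝ) (hβ : 0 < β) :
    ∃ B : Set (Fin n → Z), MeasurableSet B ∧ (Measure.pi fun _ : Fin n => μ) B ≤ ENNReal.ofReal β ∧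
      ∀ ω, ω ∉ B → ∑ i, g (ω i) ≤ Real.log (1 / β) := by
  obtain ⟨B, hB, hB1, hB2⟩ := markov_bad (Measure.pi fun _ : Fin n => μ)
    (fun ω => ENNReal.ofReal (Real.exp (∑ i : Fin n, g (ω i)))) (by fun_prop)
    (lint_pi μ n g hg h1) β hβ
  refine ⟨B, hB, hB1, fun ω hω => ?_⟩
  have := hB2 ω hω
  rw [ENNReal.ofReal_lt_ofReal_iff (by positivity)] at this
  rw [Real.le_log_iff_exp_le (by positivity)]
  exact this.le

lemma pac_bad {Z H : Type*} [MeasurableSpace Z] [MeasurableSpace H]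
    (μ : Measure Z) [IsProbabilityMeasure μ] (P : Measure H) [IsProbabilityMeasure P] (n : ℕ)
    (g : H → Z → ℝ) (hg : Measurable fun q : H × Z => g q.1 q.2)
    (h1 : ∀ h, ∫⁻ z, ENNReal.ofReal (Real.exp (g h z)) ∂μ ≤ 1)
    (hbd : ∀ z, ∃ C, ∀ h, |g h z| ≤ C)
    (β : ℝ) (hβ : 0 < β) :
    ∃ B : Set (Fin n → Z), MeasurableSet B ∧ (Measure.pi fun _ : Fin n => μ) B ≤ ENNReal.ofReal β ∧
      ∀ ω, ω ∉ B → ∀ Q : Measure H, IsProbabilityMeasure Q → klDiv Q P ≠ ⊤ →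
        ∑ i, ∫ h, g h (ω i) ∂Q ≤ (klDiv Q P).toReal + Real.log (1 / β) := by
  have hG : Measurable fun q : (Fin n → Z) × H =>
      ENNReal.ofReal (Real.exp (∑ i : Fin n, g q.2 (q.1 i))) := by
    refine ENNReal.measurable_ofReal.comp (Real.measurable_exp.comp ?_)
    refine Finset.measurable_sum _ fun i _ => ?_
    exact hg.comp (measurable_snd.prodMk ((measurable_pi_apply i).comp measurable_fst))
  have hgz : ∀ z, Measurable fun h => g h z := fun z => hg.comp (measurable_id.prodMk measurable_const)
  have hgh : ∀ h, Measurable fun z => g h z := fun h => hg.comp (measurable_const.prodMk measurable_id)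
  have hG' : AEMeasurable (Function.uncurry fun (ω : Fin n → Z) (h : H) =>
      ENNReal.ofReal (Real.exp (∑ i : Fin n, g h (ω i)))) ((Measure.pi fun _ : Fin n => μ).prod P) :=
    hG.aemeasurable
  have hswap := lintegral_lintegral_swap hG'
  obtain ⟨B, hB, hB1, hB2⟩ := markov_bad (Measure.pi fun _ : Fin n => μ)
    (fun ω => ∫⁻ h, ENNReal.ofReal (Real.exp (∑ i : Fin n, g h (ω i))) ∂P)
    hG.lintegral_prod_right' (by
      rw [hswap]
      calc _ ≤ ∫⁻ h, 1 ∂P := lintegral_mono fun h => lint_pi μ n (g h) (hgh h) (h1 h)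
        _ = 1 := by simp) β hβ
  refine ⟨B, hB, hB1, fun ω hω Q hQ hkl => ?_⟩
  choose C hC using hbd
  have hint : ∀ i, Integrable (fun h => g h (ω i)) Q := fun i =>
    Integrable.of_bound (hgz _).aestronglyMeasurable (C (ω i)) (ae_of_all _ fun h => by
      simpa using hC (ω i) h)
  rw [← integral_finsetSum _ (fun i _ => hint i)]
  have hbdS : ∀ h, |∑ i, g h (ω i)| ≤ ∑ i, C (ω i) := fun h =>
    (Finset.abs_sum_le_sum_abs _ _).trans (Finset.sum_le_sum fun i _ => hC _ h)
  have hmS : Measurable fun h => ∑ i, g h (ω i) := Finset.measurable_sum _ fun i _ => hgz _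
  refine (dv_ineq P Q hkl (fun h => ∑ i, g h (ω i)) hmS _ hbdS).trans ?_
  have h3 := hB2 ω hω
  have hiP : Integrable (fun h => Real.exp (∑ i, g h (ω i))) P :=
    Integrable.of_bound (by fun_prop) (Real.exp (∑ i, C (ω i))) (ae_of_all _ fun h => by
      simpa using (abs_le.1 (hbdS h)).2)
  rw [← ofReal_integral_eq_lintegral_ofReal hiP (ae_of_all _ fun h => (Real.exp_pos _).le),
    ENNReal.ofReal_lt_ofReal_iff (by positivity)] at h3
  have h4 : 0 < ∫ h, Real.exp (∑ i, g h (ω i)) ∂P := integral_exp_pos hiP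
  have := Real.log_le_log h4 h3.le
  linarith

lemma exp_aux (u : ℝ) : Real.exp (u - u ^ 2 / 2) ≤ 1 + u + u ^ 2 / 2 := by
  have hpos : ∀ v : ℝ, 0 < 1 + v + v ^ 2 / 2 := fun v => by nlinarith [sq_nonneg (v + 1)]
  let f : ℝ → ℝ := fun v => (1 + v + v ^ 2 / 2) * Real.exp (v ^ 2 / 2 - v)
  have hd : ∀ v, HasDerivAt f (v * (1 + v / 2 + v ^ 2 / 2) * Real.exp (v ^ 2 / 2 - v)) v := by
    intro v
    have h1 : HasDerivAt (fun v : ℝ => 1 + v + v ^ 2 / 2) (1 + v) v := by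
      have := ((hasDerivAt_id' v).const_add 1).add (((hasDerivAt_id' v).pow 2).div_const 2)
      refine this.congr_deriv ?_
      simp
    have h2 : HasDerivAt (fun v : ℝ => v ^ 2 / 2 - v) (v - 1) v := by
      have := (((hasDerivAt_id' v).pow 2).div_const 2).sub (hasDerivAt_id' v)
      refine this.congr_deriv ?_
      simp
    refine (h1.mul h2.exp).congr_deriv ?_
    ring
  have hq : ∀ v : ℝ, 0 < 1 + v / 2 + v ^ 2 / 2 := fun v => by nlinarith [sq_nonneg (v + 1 / 2)]
  have hcont : Continuous f := by fun_prop
  have hmin : f 0 ≤ f u := by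
    rcases le_total 0 u with h | h
    · have : MonotoneOn f (Set.Ici 0) := monotoneOn_of_deriv_nonneg (convex_Ici 0) hcont.continuousOn
        (fun v _ => (hd v).differentiableAt.differentiableWithinAt) (fun v hv => by
          rw [(hd v).deriv]
          simp at hv
          have := hq v
          positivity)
      exact this (by simp) h h
    · have : AntitoneOn f (Set.Iic 0) := antitoneOn_of_deriv_nonpos (convex_Iic 0) hcont.continuousOn
        (fun v _ => (hd v).differentiableAt.differentiableWithinAt) (fun v hv => by
          rw [(hd v).deriv]
          simp at hv
          have := hq v
          exact mul_nonpos_of_nonpos_of_nonneg (mul_nonpos_of_nonpos_of_nonneg hv.le this.le)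
            (Real.exp_pos _).le)
      exact this h (by simp) h
  simp [f] at hmin
  have h5 : Real.exp (u - u ^ 2 / 2) * Real.exp (u ^ 2 / 2 - u) = 1 := by
    rw [← Real.exp_add]; simp
  have h6 := Real.exp_pos (u ^ 2 / 2 - u)
  by_contra hcon
  push Not at hcon
  have := mul_lt_mul_of_pos_right hcon h6
  linarith

lemma hoeff {X : Type*} [MeasurableSpace X] (ν : Measure X) [IsProbabilityMeasure ν]
    (f : X → ℝ) (hf : Measurable f) (hb : ∀ x, f x ∈ Set.Icc (-1 : ℝ) 0) (s : ℝ) :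
    ∫⁻ x, ENNReal.ofReal (Real.exp (s * (f x - ∫ y, f y ∂ν) - s ^ 2 / 8)) ∂ν ≤ 1 := by
  have h := hasSubgaussianMGF_of_mem_Icc (μ := ν) hf.aemeasurable (ae_of_all _ hb)
  have h1 := h.mgf_le s
  have h2 := h.integrable_exp_mul s
  have e : ∀ x, ENNReal.ofReal (Real.exp (s * (f x - ∫ y, f y ∂ν) - s ^ 2 / 8))
      = ENNReal.ofReal (Real.exp (s * (f x - ∫ y, f y ∂ν))) * ENNReal.ofReal (Real.exp (- (s ^ 2 / 8))) := by
    intro x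
    rw [← ENNReal.ofReal_mul (Real.exp_pos _).le, ← Real.exp_add]; rfl
  simp_rw [e]
  rw [lintegral_mul_const _ (by fun_prop), ← ofReal_integral_eq_lintegral_ofReal h2
    (ae_of_all _ fun x => (Real.exp_pos _).le), ← ENNReal.ofReal_mul (by positivity),
    ENNReal.ofReal_le_one]
  unfold mgf at h1
  calc _ ≤ Real.exp (s ^ 2 / 8) * Real.exp (- (s ^ 2 / 8)) := by
        refine mul_le_mul_of_nonneg_right (h1.trans (le_of_eq ?_)) (Real.exp_pos _).le
        congr 1
        simp
        ring
    _ = 1 := by rw [← Real.exp_add]; simp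

/-- exponent for the importance weighting part -/
noncomputable def g3 {K : ℕ} (p c q : Fin K → ℝ) (α s : ℝ) (a : Fin K) : ℝ :=
  s * (c a * q a / p a ^ α - ∑ b, c b * q b * p b ^ (1 - α))
    - s ^ 2 / 2 * ((∑ b, p b * (q b / p b ^ (2 * α))) + q a * c a ^ 2 / p a ^ (2 * α))

lemma g3_mgf {K : ℕ} (p c q : Fin K → ℝ) (α s : ℝ) (hp : ∀ a, 0 < p a) (hps : ∑ a, p a = 1)
    (hc : ∀ a, c a ∈ Set.Icc (-1 : ℝ) 0) (hq : ∀ a, q a ∈ Set.Icc (0 : ℝ) 1) :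
    ∑ a, p a * Real.exp (g3 p c q α s a) ≤ 1 := by
  set w : Fin K → ℝ := fun a => c a * q a / p a ^ α with hw
  have hpp : ∀ a, p a ^ (2 * α) = (p a ^ α) ^ 2 := fun a => by
    rw [mul_comm, Real.rpow_mul (hp a).le]; simp
  have hpα : ∀ a, 0 < p a ^ α := fun a => Real.rpow_pos_of_pos (hp a) _
  have hcq : ∀ a, c a ^ 2 ≤ 1 := fun a => by nlinarith [(hc a).1, (hc a).2]
  have hqq : ∀ a, q a ^ 2 ≤ q a := fun a => by nlinarith [(hq a).1, (hq a).2]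
  have hE : ∑ b, c b * q b * p b ^ (1 - α) = ∑ b, p b * w b := by
    refine Finset.sum_congr rfl fun b _ => ?_
    rw [Real.rpow_sub (hp b), Real.rpow_one]
    simp only [hw]; ring
  have hv : ∀ a, w a ^ 2 ≤ q a * c a ^ 2 / p a ^ (2 * α) := fun a => by
    rw [hpp, hw]
    simp only [div_pow]
    gcongr
    nlinarith [hqq a, sq_nonneg (c a)]
  have hD : ∑ b, p b * w b ^ 2 ≤ ∑ b, p b * (q b / p b ^ (2 * α)) := by
    refine Finset.sum_le_sum fun b _ => mul_le_mul_of_nonneg_left ((hv b).trans ?_) (hp b).le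
    rw [hpp]
    gcongr
    nlinarith [hcq b, (hq b).1]
  have hterm : ∀ a, Real.exp (g3 p c q α s a) ≤
      (1 + s * w a + (s * w a) ^ 2 / 2) *
        Real.exp (- (s * ∑ b, p b * w b + s ^ 2 / 2 * ∑ b, p b * w b ^ 2)) := by
    intro a
    refine le_trans ?_ (mul_le_mul_of_nonneg_right (exp_aux (s * w a)) (Real.exp_pos _).le)
    rw [← Real.exp_add, Real.exp_le_exp]
    unfold g3
    rw [hE]
    have h0 : 0 ≤ s ^ 2 / 2 := by positivity
    have h1 := mul_le_mul_of_nonneg_left (hv a) h0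
    have h2 := mul_le_mul_of_nonneg_left hD h0
    have h3 : c a * q a / p a ^ α = w a := rfl
    rw [h3]
    linarith
  calc ∑ a, p a * Real.exp (g3 p c q α s a) ≤ ∑ a, p a * ((1 + s * w a + (s * w a) ^ 2 / 2) *
        Real.exp (- (s * ∑ b, p b * w b + s ^ 2 / 2 * ∑ b, p b * w b ^ 2))) :=
        Finset.sum_le_sum fun a _ => mul_le_mul_of_nonneg_left (hterm a) (hp a).le
    _ = (1 + s * ∑ b, p b * w b + s ^ 2 / 2 * ∑ b, p b * w b ^ 2) *
        Real.exp (- (s * ∑ b, p b * w b + s ^ 2 / 2 * ∑ b, p b * w b ^ 2)) := by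
        simp_rw [← mul_assoc]
        rw [← Finset.sum_mul]
        congr 1
        have hsplit : ∀ a, p a * (1 + s * w a + (s * w a) ^ 2 / 2)
            = p a + s * (p a * w a) + s ^ 2 / 2 * (p a * w a ^ 2) := fun a => by ring
        simp_rw [hsplit]
        rw [Finset.sum_add_distrib, Finset.sum_add_distrib, hps, Finset.mul_sum, Finset.mul_sum]
    _ ≤ Real.exp (s * ∑ b, p b * w b + s ^ 2 / 2 * ∑ b, p b * w b ^ 2) *
        Real.exp (- (s * ∑ b, p b * w b + s ^ 2 / 2 * ∑ b, p b * w b ^ 2)) := by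
        refine mul_le_mul_of_nonneg_right ?_ (Real.exp_pos _).le
        linarith [Real.add_one_le_exp (s * ∑ b, p b * w b + s ^ 2 / 2 * ∑ b, p b * w b ^ 2)]
    _ = 1 := by rw [← Real.exp_add]; simp

lemma grid_num (n : ℕ) (hn : 1 ≤ n) : ∃ N : ℕ, 1 ≤ N ∧
    (n : ℝ) / (2 * N ^ 2) ≤ Real.log (2 * Real.sqrt n / N) := by
  refine ⟨Nat.sqrt (n - 1) + 1, by omega, ?_⟩
  set m := Nat.sqrt (n - 1) with hm
  have h1 : m * m ≤ n - 1 := Nat.sqrt_le _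
  have h2 : n - 1 < (m + 1) * (m + 1) := Nat.lt_succ_sqrt (n - 1)
  have h3 : n ≤ (m + 1) ^ 2 := by nlinarith [Nat.sub_add_cancel hn]
  have h4 : (m + 1) ^ 2 ≤ 2 * n := by
    have : m * m + 1 ≤ n := by omega
    zify at this ⊢
    nlinarith [sq_nonneg ((m : ℤ) - 1)]
  have h3' : (n : ℝ) ≤ ((m + 1 : ℕ) : ℝ) ^ 2 := by exact_mod_cast h3
  have h4' : ((m + 1 : ℕ) : ℝ) ^ 2 ≤ 2 * n := by exact_mod_cast h4
  have hN : (0 : ℝ) < ((m + 1 : ℕ) : ℝ) := by positivity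
  set N : ℝ := ((m + 1 : ℕ) : ℝ)
  have hn0 : (0 : ℝ) < n := by exact_mod_cast hn
  set y : ℝ := 2 * Real.sqrt n / N with hy
  have hypos : 0 < y := by positivity
  have hy2 : y ^ 2 = 4 * n / N ^ 2 := by
    rw [hy, div_pow, mul_pow, Real.sq_sqrt hn0.le]; norm_num
  have hyl : 2 ≤ y ^ 2 := by
    rw [hy2, le_div_iff₀ (by positivity)]; linarith
  have hyu : y ^ 2 ≤ 4 := by
    rw [hy2, div_le_iff₀ (by positivity)]; linarith
  have e : (n : ℝ) / (2 * N ^ 2) = y ^ 2 / 8 := by rw [hy2]; field_simp; norm_num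
  rw [e]
  refine le_trans ?_ (Real.one_sub_inv_le_log_of_pos hypos)
  have hy1 : 1 ≤ y := by nlinarith
  have hy2' : y ≤ 2 := by nlinarith
  have : y ^ 2 / 8 * y ≤ y - 1 := by
    nlinarith [mul_nonneg (sub_nonneg.2 hy2') (by nlinarith : 0 ≤ y ^ 2 + 2 * y - 4)]
  have h5 : (1 - y⁻¹) * y = y - 1 := by field_simp
  exact le_of_mul_le_mul_right (this.trans h5.ge) hypos

lemma int_fin {H : Type*} [MeasurableSpace H] {K : ℕ} (Q : Measure H) [IsProbabilityMeasure Q]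
    (e : H → Fin K) (he : Measurable e) (φ : Fin K → ℝ) :
    ∫ h, φ (e h) ∂Q = ∑ a, (Q {h | e h = a}).toReal * φ a := by
  have : IsProbabilityMeasure (Q.map e) := Measure.isProbabilityMeasure_map he.aemeasurable
  rw [← integral_map (φ := e) (f := φ) he.aemeasurable
    (measurable_of_finite φ).aestronglyMeasurable, integral_fintype (Integrable.of_finite)]
  refine Finset.sum_congr rfl fun a _ => ?_
  rw [measureReal_def, Measure.map_apply he (measurableSet_singleton a)]
  rfl

lemma pi_sum {H : Type*} [MeasurableSpace H] {K : ℕ} (Q : Measure H) [IsProbabilityMeasure Q]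
    (e : H → Fin K) (he : Measurable e) : ∑ a, (Q {h | e h = a}).toReal = 1 := by
  have := int_fin Q e he (fun _ => 1)
  simpa using this.symm

lemma pi_mem {H : Type*} [MeasurableSpace H] (Q : Measure H) [IsProbabilityMeasure Q]
    (A : Set H) : (Q A).toReal ∈ Set.Icc (0 : ℝ) 1 :=
  ⟨ENNReal.toReal_nonneg, by simpa [measureReal_def] using measureReal_le_one (μ := Q) (s := A)⟩

lemma meas_pi {X H : Type*} [MeasurableSpace X] [MeasurableSpace H] {K : ℕ} (Q : Measure H)
    [IsProbabilityMeasure Q] (ev : H → X → Fin K) (hev : Measurable fun q : H × X => ev q.1 q.2)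
    (a : Fin K) : Measurable fun x => (Q {h | ev h x = a}).toReal := by
  have hs : MeasurableSet {q : H × X | ev q.1 q.2 = a} := hev (measurableSet_singleton a)
  exact (measurable_measure_prodMk_right (μ := Q) hs).ennreal_toReal

lemma meas_fin {X : Type*} [MeasurableSpace X] {K : ℕ} (f : X → Fin K → ℝ)
    (hf : ∀ a, Measurable fun x => f x a) : Measurable fun z : X × Fin K => f z.1 z.2 :=
  measurable_from_prod_countable_left fun a => hf a

lemma meas_fin2 {X : Type*} [MeasurableSpace X] {K : ℕ} (f : X → Fin K → Fin K → ℝ)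
    (hf : ∀ a b, Measurable fun x => f x a b) :
    Measurable fun z : X × (Fin K × Fin K) => f z.1 z.2.1 z.2.2 :=
  measurable_from_prod_countable_left fun a => hf a.1 a.2

lemma meas_g3 {X : Type*} [MeasurableSpace X] {K : ℕ} (p c q : X → Fin K → ℝ)
    (hp : ∀ a, Measurable fun x => p x a) (hc : ∀ a, Measurable fun x => c x a)
    (hq : ∀ a, Measurable fun x => q x a) (α s : ℝ) (a : Fin K) :
    Measurable fun x => g3 (p x) (c x) (q x) α s a := by
  unfold g3
  fun_prop

lemma comp_lint {X : Type*} [MeasurableSpace X] {K : ℕ} (ν : Measure X) [IsProbabilityMeasure ν]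
    (p0 : X → Fin K → ℝ) (hp0pos : ∀ x a, 0 < p0 x a)
    (κ0 : Kernel X (Fin K)) [IsMarkovKernel κ0]
    (hκ0 : ∀ x a, κ0 x {a} = ENNReal.ofReal (p0 x a))
    (A : X → ℝ) (B : X → Fin K → ℝ) (hA : Measurable A) (hB : ∀ a, Measurable fun x => B x a)
    (hA1 : ∫⁻ x, ENNReal.ofReal (Real.exp (A x)) ∂ν ≤ 1)
    (hB1 : ∀ x, ∑ a, p0 x a * Real.exp (B x a) ≤ 1) :
    ∫⁻ z, ENNReal.ofReal (Real.exp (A z.1 + B z.1 z.2)) ∂(ν ⊗ₘ κ0) ≤ 1 := by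
  have hm : Measurable fun z : X × Fin K => ENNReal.ofReal (Real.exp (A z.1 + B z.1 z.2)) := by
    have := meas_fin B hB
    fun_prop
  rw [Measure.lintegral_compProd hm]
  refine le_trans (lintegral_mono fun x => ?_) hA1
  rw [lintegral_fintype]
  have e : ∀ a, ENNReal.ofReal (Real.exp (A x + B x a)) * κ0 x {a}
      = ENNReal.ofReal (Real.exp (A x) * (p0 x a * Real.exp (B x a))) := fun a => by
    rw [hκ0, ← ENNReal.ofReal_mul (Real.exp_pos _).le, Real.exp_add]
    congr 1; ring
  simp_rw [e]
  rw [← ENNReal.ofReal_sum_of_nonneg (fun a _ => by have := hp0pos x a; positivity),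
    ← Finset.mul_sum]
  refine ENNReal.ofReal_le_ofReal ?_
  exact mul_le_of_le_one_right (Real.exp_pos _).le (hB1 x)

lemma g3_lin {H : Type*} [MeasurableSpace H] {K : ℕ} (Q : Measure H) [IsProbabilityMeasure Q]
    (e : H → Fin K) (he : Measurable e) (p c : Fin K → ℝ) (α s : ℝ) (a : Fin K) :
    ∫ h, g3 p c (fun b => if e h = b then 1 else 0) α s a ∂Q
      = g3 p c (fun b => (Q {h | e h = b}).toReal) α s a := by
  rw [int_fin Q e he (fun d => g3 p c (fun b => if d = b then 1 else 0) α s a)]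
  set q : Fin K → ℝ := fun b => (Q {h | e h = b}).toReal with hq
  change ∑ d, q d * g3 p c (fun b => if d = b then 1 else 0) α s a = _
  have e1 : ∀ d, q d * g3 p c (fun b => if d = b then 1 else 0) α s a
      = s * ((if d = a then c a * q d / p a ^ α else 0) - c d * q d * p d ^ (1 - α))
        - s ^ 2 / 2 * (p d * (q d / p d ^ (2 * α)) +
          (if d = a then q d * c a ^ 2 / p a ^ (2 * α) else 0)) := by
    intro d
    unfold g3
    have s1 : ∑ b, c b * (if d = b then (1 : ℝ) else 0) * p b ^ (1 - α) = c d * p d ^ (1 - α) := by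
      simp
    have s2 : ∑ b, p b * ((if d = b then (1 : ℝ) else 0) / p b ^ (2 * α)) = p d * (1 / p d ^ (2 * α)) := by
      rw [Finset.sum_eq_single d]
      · simp
      · intro b _ hb; simp [Ne.symm hb]
      · simp
    rw [s1, s2]
    by_cases h : d = a
    · simp only [if_pos h]
      ring
    · simp only [if_neg h]
      ring
  simp_rw [e1]
  rw [Finset.sum_sub_distrib, ← Finset.mul_sum, ← Finset.mul_sum, Finset.sum_sub_distrib,
    Finset.sum_add_distrib, Finset.sum_ite_eq', Finset.sum_ite_eq']
  simp [g3]

lemma upper3 {X : Type*} [MeasurableSpace X] {K : ℕ} {H : Type*} [MeasurableSpace H]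
    (ν : Measure X) [IsProbabilityMeasure ν] (p0 c : X → Fin K → ℝ)
    (hp0meas : ∀ a, Measurable fun x => p0 x a) (hcmeas : ∀ a, Measurable fun x => c x a)
    (hp0pos : ∀ x a, 0 < p0 x a) (hp0sum : ∀ x, ∑ a, p0 x a = 1)
    (hc : ∀ x a, c x a ∈ Set.Icc (-1 : ℝ) 0)
    (ev : H → X → Fin K) (hev : Measurable fun q : H × X => ev q.1 q.2)
    (κ0 : Kernel X (Fin K)) [IsMarkovKernel κ0]
    (hκ0 : ∀ x a, κ0 x {a} = ENNReal.ofReal (p0 x a))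
    (P : Measure H) [IsProbabilityMeasure P] (n : ℕ) (α : ℝ)
    (s β : ℝ) (hβ : 0 < β) :
    ∃ B : Set (Fin n → X × Fin K), MeasurableSet B ∧
      (Measure.pi fun _ : Fin n => ν ⊗ₘ κ0) B ≤ ENNReal.ofReal β ∧
      ∀ ω, ω ∉ B → ∀ Q : Measure H, IsProbabilityMeasure Q → klDiv Q P ≠ ⊤ →
        ∑ i, g3 (p0 (ω i).1) (c (ω i).1) (fun b => (Q {h | ev h (ω i).1 = b}).toReal) α s (ω i).2
          ≤ (klDiv Q P).toReal + Real.log (1 / β) := by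
  have hevx : ∀ x, Measurable fun h => ev h x := fun x => hev.comp (measurable_id.prodMk measurable_const)
  have hevh : ∀ h, Measurable fun x => ev h x := fun h => hev.comp (measurable_const.prodMk measurable_id)
  let Ψ : X → Fin K → Fin K → ℝ := fun x d a => g3 (p0 x) (c x) (fun b => if d = b then 1 else 0) α s a
  have hΨ : Measurable fun z : X × (Fin K × Fin K) => Ψ z.1 z.2.1 z.2.2 :=
    meas_fin2 Ψ fun a b => meas_g3 p0 c (fun _ b => if a = b then 1 else 0) hp0meas hcmeas
      (fun _ => measurable_const) α s b
  have hg : Measurable fun q : H × (X × Fin K) => Ψ q.2.1 (ev q.1 q.2.1) q.2.2 := by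
    have h1 : Measurable fun q : H × (X × Fin K) => ev q.1 q.2.1 :=
      hev.comp (measurable_fst.prodMk (measurable_fst.comp measurable_snd))
    exact hΨ.comp ((measurable_fst.comp measurable_snd).prodMk (h1.prodMk
      (measurable_snd.comp measurable_snd)))
  obtain ⟨B, hB, hB1, hB2⟩ := pac_bad (ν ⊗ₘ κ0) P n (fun h z => Ψ z.1 (ev h z.1) z.2) hg
    (fun h => by
      have := comp_lint ν p0 hp0pos κ0 hκ0 (fun _ => 0) (fun x a => Ψ x (ev h x) a) measurable_const
        (fun a => hΨ.comp (measurable_id.prodMk ((hevh h).prodMk measurable_const))) (by simp)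
        (fun x => g3_mgf _ _ _ _ _ (hp0pos x) (hp0sum x) (hc x) (fun a => by split_ifs <;> simp))
      simpa using this)
    (fun z => ⟨∑ d, |Ψ z.1 d z.2|, fun h =>
      Finset.single_le_sum (f := fun d => |Ψ z.1 d z.2|) (fun d _ => abs_nonneg _)
        (Finset.mem_univ (ev h z.1))⟩) β hβ
  refine ⟨B, hB, hB1, fun ω hω Q hQ hkl => ?_⟩
  have := hB2 ω hω Q hQ hkl
  simp only [Ψ] at this
  simp_rw [g3_lin Q _ (hevx _)] at this
  exact this

lemma upper1 {X : Type*} [MeasurableSpace X] {K : ℕ} {H : Type*} [MeasurableSpace H]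
    (ν : Measure X) [IsProbabilityMeasure ν] (p0 c : X → Fin K → ℝ)
    (hp0meas : ∀ a, Measurable fun x => p0 x a) (hcmeas : ∀ a, Measurable fun x => c x a)
    (hp0pos : ∀ x a, 0 < p0 x a) (hp0sum : ∀ x, ∑ a, p0 x a = 1)
    (hc : ∀ x a, c x a ∈ Set.Icc (-1 : ℝ) 0)
    (ev : H → X → Fin K) (hev : Measurable fun q : H × X => ev q.1 q.2)
    (κ0 : Kernel X (Fin K)) [IsMarkovKernel κ0]
    (hκ0 : ∀ x a, κ0 x {a} = ENNReal.ofReal (p0 x a))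
    (P : Measure H) [IsProbabilityMeasure P] (n : ℕ)
    (s β : ℝ) (hβ : 0 < β) :
    ∃ B : Set (Fin n → X × Fin K), MeasurableSet B ∧
      (Measure.pi fun _ : Fin n => ν ⊗ₘ κ0) B ≤ ENNReal.ofReal β ∧
      ∀ ω, ω ∉ B → ∀ Q : Measure H, IsProbabilityMeasure Q → klDiv Q P ≠ ⊤ →
        ∑ i, (s * ((∫ x, ∑ a, (Q {h | ev h x = a}).toReal * c x a ∂ν)
            - ∑ a, (Q {h | ev h (ω i).1 = a}).toReal * c (ω i).1 a) - s ^ 2 / 8)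
          ≤ (klDiv Q P).toReal + Real.log (1 / β) := by
  have hevx : ∀ x, Measurable fun h => ev h x := fun x => hev.comp (measurable_id.prodMk measurable_const)
  have hevh : ∀ h, Measurable fun x => ev h x := fun h => hev.comp (measurable_const.prodMk measurable_id)
  have hcm := meas_fin c hcmeas
  have hce : Measurable fun q : H × X => c q.2 (ev q.1 q.2) := hcm.comp (measurable_snd.prodMk hev)
  have hceh : ∀ h, Measurable fun x => c x (ev h x) := fun h => hce.comp (measurable_const.prodMk measurable_id)
  have hcex : ∀ x, Measurable fun h => c x (ev h x) := fun x => hce.comp (measurable_id.prodMk measurable_const)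
  have hcabs : ∀ x a, |c x a| ≤ 1 := fun x a => abs_le.2 ⟨(hc x a).1, (hc x a).2.trans zero_le_one⟩
  let m : H → ℝ := fun h => ∫ x, c x (ev h x) ∂ν
  have hm : Measurable m := (hce.stronglyMeasurable.integral_prod_right' (ν := ν)).measurable
  have hmabs : ∀ h, |m h| ≤ 1 := fun h => by
    have := norm_integral_le_of_norm_le_const (μ := ν) (f := fun x => c x (ev h x)) (C := 1)
      (ae_of_all _ fun x => by simpa using hcabs x (ev h x))
    simpa using this
  have hg : Measurable fun q : H × (X × Fin K) => s * (m q.1 - c q.2.1 (ev q.1 q.2.1)) - s ^ 2 / 8 := by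
    have h1 : Measurable fun q : H × (X × Fin K) => c q.2.1 (ev q.1 q.2.1) :=
      hce.comp (measurable_fst.prodMk (measurable_fst.comp measurable_snd))
    have h2 : Measurable fun q : H × (X × Fin K) => m q.1 := hm.comp measurable_fst
    fun_prop
  obtain ⟨B, hB, hB1, hB2⟩ := pac_bad (ν ⊗ₘ κ0) P n
    (fun h z => s * (m h - c z.1 (ev h z.1)) - s ^ 2 / 8) hg
    (fun h => by
      have := comp_lint ν p0 hp0pos κ0 hκ0 (fun x => s * (m h - c x (ev h x)) - s ^ 2 / 8)
        (fun x a => 0) (by have := hceh h; fun_prop) (fun a => measurable_const) (by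
          have h2 := hoeff ν (fun x => c x (ev h x)) (hceh h) (fun x => hc _ _) (-s)
          refine le_trans (le_of_eq ?_) h2
          refine lintegral_congr fun x => ?_
          congr 2
          simp only [m]; ring)
        (fun x => by simp [hp0sum])
      simpa using this)
    (fun z => ⟨|s| * 2 + s ^ 2 / 8, fun h => by
      refine (abs_sub _ _).trans ?_
      rw [abs_mul, abs_of_nonneg (by positivity : 0 ≤ s ^ 2 / 8)]
      have := abs_sub (m h) (c z.1 (ev h z.1))
      have h2 : |m h - c z.1 (ev h z.1)| ≤ 2 := by linarith [hmabs h, hcabs z.1 (ev h z.1)]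
      gcongr⟩) β hβ
  refine ⟨B, hB, hB1, fun ω hω Q hQ hkl => ?_⟩
  have h1 := hB2 ω hω Q hQ hkl
  refine le_trans (le_of_eq ?_) h1
  have hmi : Integrable m Q := Integrable.of_bound hm.aestronglyMeasurable 1
    (ae_of_all _ fun h => by simpa using hmabs h)
  have hci : ∀ x, Integrable (fun h => c x (ev h x)) Q := fun x =>
    Integrable.of_bound (hcex x).aestronglyMeasurable 1 (ae_of_all _ fun h => by simpa using hcabs _ _)
  have hmQ : ∫ h, m h ∂Q = ∫ x, ∑ a, (Q {h | ev h x = a}).toReal * c x a ∂ν := by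
    have : Integrable (Function.uncurry fun h x => c x (ev h x)) (Q.prod ν) :=
      Integrable.of_bound hce.aestronglyMeasurable 1 (ae_of_all _ fun q => by
        simpa [Function.uncurry] using hcabs q.2 (ev q.1 q.2))
    simp only [m]
    rw [integral_integral_swap this]
    exact integral_congr_ae (ae_of_all _ fun x => int_fin Q _ (hevx x) (c x))
  refine Finset.sum_congr rfl fun i _ => ?_
  have hi1 := (hmi.sub (hci (ω i).1)).const_mul s
  simp only [Pi.sub_apply] at hi1
  rw [integral_sub hi1 (integrable_const _), integral_const_mul, integral_sub hmi (hci _), hmQ,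
    int_fin Q _ (hevx (ω i).1) (c (ω i).1)]
  simp

lemma lower_s {X : Type*} [MeasurableSpace X] {K : ℕ} {H : Type*} [MeasurableSpace H]
    (ν : Measure X) [IsProbabilityMeasure ν] (p0 c : X → Fin K → ℝ)
    (hp0meas : ∀ a, Measurable fun x => p0 x a) (hcmeas : ∀ a, Measurable fun x => c x a)
    (hp0pos : ∀ x a, 0 < p0 x a) (hp0sum : ∀ x, ∑ a, p0 x a = 1)
    (hc : ∀ x a, c x a ∈ Set.Icc (-1 : ℝ) 0)
    (ev : H → X → Fin K) (hev : Measurable fun q : H × X => ev q.1 q.2)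
    (κ0 : Kernel X (Fin K)) [IsMarkovKernel κ0]
    (hκ0 : ∀ x a, κ0 x {a} = ENNReal.ofReal (p0 x a))
    (n : ℕ) (α : ℝ)
    (Q : Measure H) [IsProbabilityMeasure Q] (s β : ℝ) (hβ : 0 < β) :
    ∃ B : Set (Fin n → X × Fin K), MeasurableSet B ∧
      (Measure.pi fun _ : Fin n => ν ⊗ₘ κ0) B ≤ ENNReal.ofReal β ∧
      ∀ ω, ω ∉ B →
        ∑ i, ((s * ((∑ a, (Q {h | ev h (ω i).1 = a}).toReal * c (ω i).1 a)
            - ∫ x, ∑ a, (Q {h | ev h x = a}).toReal * c x a ∂ν) - s ^ 2 / 8)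
          + g3 (p0 (ω i).1) (c (ω i).1) (fun b => (Q {h | ev h (ω i).1 = b}).toReal) α s (ω i).2)
          ≤ Real.log (1 / β) := by
  have hevx : ∀ x, Measurable fun h => ev h x := fun x => hev.comp (measurable_id.prodMk measurable_const)
  have hπ := meas_pi Q ev hev
  let f : X → ℝ := fun x => ∑ a, (Q {h | ev h x = a}).toReal * c x a
  have hf : Measurable f := Finset.measurable_sum _ fun a _ => (hπ a).mul (hcmeas a)
  have hfb : ∀ x, f x ∈ Set.Icc (-1 : ℝ) 0 := by
    intro x
    have hs := pi_sum Q _ (hevx x)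
    constructor
    · rw [← hs, ← Finset.sum_neg_distrib]
      refine Finset.sum_le_sum fun a _ => ?_
      nlinarith [(pi_mem Q {h | ev h x = a}).1, (hc x a).1]
    · refine Finset.sum_nonpos fun a _ => ?_
      exact mul_nonpos_of_nonneg_of_nonpos (pi_mem Q _).1 (hc x a).2
  let A : X → ℝ := fun x => s * (f x - ∫ x, f x ∂ν) - s ^ 2 / 8
  let G : X → Fin K → ℝ := fun x a =>
    g3 (p0 x) (c x) (fun b => (Q {h | ev h x = b}).toReal) α s a
  have hA : Measurable A := by fun_prop
  have hG : ∀ a, Measurable fun x => G x a := fun a => meas_g3 p0 c _ hp0meas hcmeas hπ α s a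
  have hGm := meas_fin G hG
  exact single_bad (ν ⊗ₘ κ0) n (fun z => A z.1 + G z.1 z.2) (by fun_prop)
    (comp_lint ν p0 hp0pos κ0 hκ0 A G hA hG (hoeff ν f hf hfb s)
      (fun x => g3_mgf _ _ _ _ _ (hp0pos x) (hp0sum x) (hc x) (fun a => pi_mem Q _))) β hβ


lemma g3_sum {n K : ℕ} (p c q : Fin n → Fin K → ℝ) (a : Fin n → Fin K) (α s : ℝ) :
    ∑ i, g3 (p i) (c i) (q i) α s (a i) =
      s * ((∑ i, c i (a i) * q i (a i) / p i (a i) ^ α)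
          - ∑ i, ∑ b, c i b * q i b * p i b ^ (1 - α))
      - s ^ 2 / 2 * ∑ i, ((∑ b, p i b * (q i b / p i b ^ (2 * α)))
          + q i (a i) * c i (a i) ^ 2 / p i (a i) ^ (2 * α)) := by
  unfold g3
  rw [Finset.sum_sub_distrib, ← Finset.mul_sum, ← Finset.mul_sum, Finset.sum_sub_distrib]

lemma bias_bounds {K : ℕ} (p c q : Fin K → ℝ) (α : ℝ) (hα : α ∈ Set.Icc (0 : ℝ) 1)
    (hp : ∀ a, 0 < p a) (hps : ∑ a, p a = 1)
    (hc : ∀ a, c a ∈ Set.Icc (-1 : ℝ) 0) (hq : ∀ a, 0 ≤ q a) (hqs : ∑ a, q a = 1) :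
    (∑ a, q a * c a ≤ ∑ a, c a * q a * p a ^ (1 - α)) ∧
    (∑ a, c a * q a * p a ^ (1 - α) ≤ ∑ a, q a * c a + (1 - ∑ a, q a * p a ^ (1 - α))) ∧
    0 ≤ 1 - ∑ a, q a * p a ^ (1 - α) := by
  have hp1 : ∀ a, p a ≤ 1 := fun a => by
    rw [← hps]; exact Finset.single_le_sum (fun b _ => (hp b).le) (Finset.mem_univ a)
  have hr1 : ∀ a, p a ^ (1 - α) ≤ 1 := fun a =>
    Real.rpow_le_one (hp a).le (hp1 a) (by linarith [hα.2])
  refine ⟨?_, ?_, ?_⟩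
  · refine Finset.sum_le_sum fun a _ => ?_
    nlinarith [mul_nonneg (mul_nonneg (hq a) (neg_nonneg.2 (hc a).2)) (sub_nonneg.2 (hr1 a))]
  · have hsum : ∑ a, c a * q a * p a ^ (1 - α)
        ≤ ∑ a, (q a * c a + (q a - q a * p a ^ (1 - α))) := by
      refine Finset.sum_le_sum fun a _ => ?_
      have h1 : 0 ≤ 1 + c a := by linarith [(hc a).1]
      nlinarith [mul_nonneg (mul_nonneg (hq a) h1) (sub_nonneg.2 (hr1 a))]
    rw [Finset.sum_add_distrib, Finset.sum_sub_distrib, hqs] at hsum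
    exact hsum
  · have hsum : 0 ≤ ∑ a, (q a - q a * p a ^ (1 - α)) := by
      refine Finset.sum_nonneg fun a _ => ?_
      nlinarith [mul_nonneg (hq a) (sub_nonneg.2 (hr1 a))]
    rw [Finset.sum_sub_distrib, hqs] at hsum
    exact hsum

/-- choosing the grid point -/
lemma grid_choose (N : ℕ) (hN : 1 ≤ N) (D : ℝ) (h0 : 0 ≤ D) (h1 : D ≤ 1) :
    ∃ j : Fin N, |4 * ((j : ℕ) + 1 / 2) / N - 4 * D| ≤ 2 / N := by
  have hN0 : (0 : ℝ) < N := by exact_mod_cast hN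
  have key : ∀ j : ℕ, (j : ℝ) ≤ N * D → N * D ≤ j + 1 →
      |4 * ((j : ℝ) + 1 / 2) / N - 4 * D| ≤ 2 / N := by
    intro j ha hb
    have e : 4 * ((j : ℝ) + 1 / 2) / N - 4 * D = (4 * (j + 1 / 2 - N * D)) / N := by
      field_simp
    rw [e, abs_div, abs_of_pos hN0]
    gcongr
    rw [abs_le]; constructor <;> linarith
  rcases lt_or_ge D 1 with h | h
  · have hnn : 0 ≤ N * D := by positivity
    refine ⟨⟨⌊N * D⌋₊, ?_⟩, key _ (Nat.floor_le hnn) (Nat.lt_floor_add_one _).le⟩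
    rw [Nat.floor_lt hnn]
    nlinarith
  · have hD : D = 1 := le_antisymm h1 h
    subst hD
    refine ⟨⟨N - 1, by omega⟩, key _ ?_ ?_⟩
    · simp
    · simp [Nat.cast_sub hN]

lemma upper1_det (n N : ℕ) (hn : 1 ≤ n) (hN : 1 ≤ N) (δ : ℝ) (hδ : 0 < δ)
    (hlog : (n : ℝ) / (2 * N ^ 2) ≤ Real.log (2 * Real.sqrt n / N)) (D KL : ℝ) (hD : D ≤ 1)
    (hj : ∀ j : Fin N, (n : ℝ) * ((4 * ((j : ℕ) + 1 / 2) / N) * D - (4 * ((j : ℕ) + 1 / 2) / N) ^ 2 / 8)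
      ≤ KL + Real.log (1 / (δ / (2 * N)))) :
    D ≤ Real.sqrt ((KL + Real.log (4 * Real.sqrt n / δ)) / (2 * n)) := by
  rcases lt_or_ge D 0 with h | h
  · exact h.le.trans (Real.sqrt_nonneg _)
  have hn0 : (0 : ℝ) < n := by exact_mod_cast hn
  have hN0 : (0 : ℝ) < N := by exact_mod_cast hN
  have hsn : 0 < Real.sqrt n := Real.sqrt_pos.2 hn0
  apply Real.le_sqrt_of_sq_le
  rw [le_div_iff₀ (by positivity)]
  obtain ⟨j, hjj⟩ := grid_choose N hN D h hD
  have h1 := hj j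
  set s : ℝ := 4 * ((j : ℕ) + 1 / 2) / N
  have h2 : (s - 4 * D) ^ 2 ≤ (2 / N) ^ 2 := sq_le_sq' (by linarith [(abs_le.1 hjj).1]) (abs_le.1 hjj).2
  have h3 : (n : ℝ) * (2 / N) ^ 2 / 8 = n / (2 * N ^ 2) := by field_simp; norm_num
  have h4 : Real.log (4 * Real.sqrt n / δ) = Real.log (1 / (δ / (2 * N))) + Real.log (2 * Real.sqrt n / N) := by
    rw [← Real.log_mul (by positivity) (by positivity)]
    congr 1; field_simp; norm_num
  have h5 := mul_le_mul_of_nonneg_left h2 hn0.le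
  nlinarith

lemma lower_final {X : Type*} [MeasurableSpace X] {K : ℕ} {H : Type*} [MeasurableSpace H]
    (ν : Measure X) [IsProbabilityMeasure ν] (p0 c : X → Fin K → ℝ)
    (hp0meas : ∀ a, Measurable fun x => p0 x a) (hcmeas : ∀ a, Measurable fun x => c x a)
    (hp0pos : ∀ x a, 0 < p0 x a) (hp0sum : ∀ x, ∑ a, p0 x a = 1)
    (hc : ∀ x a, c x a ∈ Set.Icc (-1 : ℝ) 0)
    (ev : H → X → Fin K) (hev : Measurable fun q : H × X => ev q.1 q.2)
    (κ0 : Kernel X (Fin K)) [IsMarkovKernel κ0]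
    (hκ0 : ∀ x a, κ0 x {a} = ENNReal.ofReal (p0 x a))
    (n : ℕ) (hn : 1 ≤ n) (α lam δ : ℝ) (hlam : 0 < lam) (hδ : δ ∈ Set.Ioo (0 : ℝ) 1)
    (Q : Measure H) [IsProbabilityMeasure Q] :
    ∃ B : Set (Fin n → X × Fin K), MeasurableSet B ∧
      (Measure.pi fun _ : Fin n => ν ⊗ₘ κ0) B ≤ ENNReal.ofReal (δ / 4) ∧
      ∀ ω, ω ∉ B →
        (n : ℝ)⁻¹ * (∑ i, ∑ a, (Q {h | ev h (ω i).1 = a}).toReal * c (ω i).1 a)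
          - (∫ x, ∑ a, (Q {h | ev h x = a}).toReal * c x a ∂ν)
          + (n : ℝ)⁻¹ * (∑ i, c (ω i).1 (ω i).2 * (Q {h | ev h (ω i).1 = (ω i).2}).toReal
              / p0 (ω i).1 (ω i).2 ^ α)
          - (n : ℝ)⁻¹ * (∑ i, ∑ a, c (ω i).1 a * (Q {h | ev h (ω i).1 = a}).toReal
              * p0 (ω i).1 a ^ (1 - α))
        ≤ Real.sqrt (Real.log (4 * Real.sqrt n / δ) / (2 * n)) + Real.log (4 / δ) / (n * lam)
          + lam / 2 * ((n : ℝ)⁻¹ * ∑ i,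
            ((∑ a, p0 (ω i).1 a *
                ((Q {h | ev h (ω i).1 = a}).toReal / p0 (ω i).1 a ^ (2 * α)))
              + (Q {h | ev h (ω i).1 = (ω i).2}).toReal * c (ω i).1 (ω i).2 ^ 2
                  / p0 (ω i).1 (ω i).2 ^ (2 * α))) := by
  have hn0 : (0 : ℝ) < n := by exact_mod_cast hn
  have hn1 : (1 : ℝ) ≤ n := by exact_mod_cast hn
  have hsn : 1 ≤ Real.sqrt n := Real.one_le_sqrt.2 hn1
  have hδ0 := hδ.1
  have hL : 0 < Real.log (4 * Real.sqrt n / δ) := by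
    apply Real.log_pos
    rw [lt_div_iff₀ hδ0]; linarith [hδ.2]
  have hL4 : 0 < Real.log (4 / δ) := by
    apply Real.log_pos
    rw [lt_div_iff₀ hδ0]; linarith [hδ.2]
  set t := Real.sqrt (Real.log (4 * Real.sqrt n / δ) / (2 * n)) with ht
  have ht0 : 0 < t := Real.sqrt_pos.2 (by positivity)
  have ht2 : t ^ 2 = Real.log (4 * Real.sqrt n / δ) / (2 * n) := Real.sq_sqrt (by positivity)
  have ht2' : 2 * n * t ^ 2 = Real.log (4 * Real.sqrt n / δ) := by rw [ht2]; field_simp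
  rcases le_total lam (8 * t) with hcase | hcase
  · obtain ⟨B, hB, hB1, hB2⟩ := lower_s ν p0 c hp0meas hcmeas hp0pos hp0sum hc ev hev κ0 hκ0 n α
      Q lam (δ / 4) (by positivity)
    refine ⟨B, hB, hB1, fun ω hω => ?_⟩
    have h := hB2 ω hω
    rw [Finset.sum_add_distrib, g3_sum (fun i => p0 (ω i).1) (fun i => c (ω i).1)
      (fun i b => (Q {h | ev h (ω i).1 = b}).toReal) (fun i => (ω i).2), Finset.sum_sub_distrib,
      ← Finset.mul_sum, Finset.sum_sub_distrib] at h
    simp only [Finset.sum_const, Finset.card_univ, Fintype.card_fin, nsmul_eq_mul] at h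
    rw [one_div_div] at h
    generalize (∑ i, ∑ a, (Q {h | ev h (ω i).1 = a}).toReal * c (ω i).1 a) = S1 at h ⊢
    generalize (∫ x, ∑ a, (Q {h | ev h x = a}).toReal * c x a ∂ν) = R at h ⊢
    generalize (∑ i, c (ω i).1 (ω i).2 * (Q {h | ev h (ω i).1 = (ω i).2}).toReal
              / p0 (ω i).1 (ω i).2 ^ α) = S2 at h ⊢
    generalize (∑ i, ∑ a, c (ω i).1 a * (Q {h | ev h (ω i).1 = a}).toReal
              * p0 (ω i).1 a ^ (1 - α)) = S3 at h ⊢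
    generalize (∑ i, ((∑ a, p0 (ω i).1 a *
                ((Q {h | ev h (ω i).1 = a}).toReal / p0 (ω i).1 a ^ (2 * α)))
              + (Q {h | ev h (ω i).1 = (ω i).2}).toReal * c (ω i).1 (ω i).2 ^ 2
                  / p0 (ω i).1 (ω i).2 ^ (2 * α))) = V at h ⊢
    have hnl : 0 < n * lam := by positivity
    refine le_of_mul_le_mul_left ?_ hnl
    have e1 : n * lam * ((n : ℝ)⁻¹ * S1 - R + (n : ℝ)⁻¹ * S2 - (n : ℝ)⁻¹ * S3)
        = lam * (S1 - n * R) + lam * (S2 - S3) := by field_simp; ring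
    have e2 : n * lam * (t + Real.log (4 / δ) / (n * lam) + lam / 2 * ((n : ℝ)⁻¹ * V))
        = n * lam * t + Real.log (4 / δ) + lam ^ 2 / 2 * V := by field_simp
    rw [e1, e2]
    have h6 := mul_le_mul_of_nonneg_left hcase hnl.le
    nlinarith
  · obtain ⟨B, hB, hB1, hB2⟩ := lower_s ν p0 c hp0meas hcmeas hp0pos hp0sum hc ev hev κ0 hκ0 n α
      Q (4 * t) (δ / (4 * Real.sqrt n)) (by positivity)
    refine ⟨B, hB, hB1.trans (ENNReal.ofReal_le_ofReal ?_), fun ω hω => ?_⟩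
    · gcongr
      linarith
    have h := hB2 ω hω
    rw [Finset.sum_add_distrib, g3_sum (fun i => p0 (ω i).1) (fun i => c (ω i).1)
      (fun i b => (Q {h | ev h (ω i).1 = b}).toReal) (fun i => (ω i).2), Finset.sum_sub_distrib,
      ← Finset.mul_sum, Finset.sum_sub_distrib] at h
    simp only [Finset.sum_const, Finset.card_univ, Fintype.card_fin, nsmul_eq_mul] at h
    rw [one_div_div, ← ht2'] at h
    have hV : 0 ≤ (∑ i, ((∑ a, p0 (ω i).1 a *
                ((Q {h | ev h (ω i).1 = a}).toReal / p0 (ω i).1 a ^ (2 * α)))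
              + (Q {h | ev h (ω i).1 = (ω i).2}).toReal * c (ω i).1 (ω i).2 ^ 2
                  / p0 (ω i).1 (ω i).2 ^ (2 * α))) := by
      refine Finset.sum_nonneg fun i _ => add_nonneg (Finset.sum_nonneg fun a _ => ?_) ?_
      · have := hp0pos (ω i).1 a
        positivity
      · have := hp0pos (ω i).1 (ω i).2
        positivity
    generalize (∑ i, ∑ a, (Q {h | ev h (ω i).1 = a}).toReal * c (ω i).1 a) = S1 at h ⊢
    generalize (∫ x, ∑ a, (Q {h | ev h x = a}).toReal * c x a ∂ν) = R at h ⊢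
    generalize (∑ i, c (ω i).1 (ω i).2 * (Q {h | ev h (ω i).1 = (ω i).2}).toReal
              / p0 (ω i).1 (ω i).2 ^ α) = S2 at h ⊢
    generalize (∑ i, ∑ a, c (ω i).1 a * (Q {h | ev h (ω i).1 = a}).toReal
              * p0 (ω i).1 a ^ (1 - α)) = S3 at h ⊢
    generalize (∑ i, ((∑ a, p0 (ω i).1 a *
                ((Q {h | ev h (ω i).1 = a}).toReal / p0 (ω i).1 a ^ (2 * α)))
              + (Q {h | ev h (ω i).1 = (ω i).2}).toReal * c (ω i).1 (ω i).2 ^ 2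
                  / p0 (ω i).1 (ω i).2 ^ (2 * α))) = V at h hV ⊢
    have hlogpos : 0 ≤ Real.log (4 / δ) / (n * lam) := by positivity
    suffices hs : (n : ℝ)⁻¹ * S1 - R + (n : ℝ)⁻¹ * S2 - (n : ℝ)⁻¹ * S3
        ≤ t + lam / 2 * ((n : ℝ)⁻¹ * V) by linarith
    have hnl : 0 < n * (4 * t) := by positivity
    refine le_of_mul_le_mul_left ?_ hnl
    have e1 : n * (4 * t) * ((n : ℝ)⁻¹ * S1 - R + (n : ℝ)⁻¹ * S2 - (n : ℝ)⁻¹ * S3)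
        = (4 * t) * (S1 - n * R) + (4 * t) * (S2 - S3) := by field_simp; ring
    have e2 : n * (4 * t) * (t + lam / 2 * ((n : ℝ)⁻¹ * V))
        = 4 * n * t ^ 2 + 2 * t * lam * V := by field_simp; ring
    rw [e1, e2]
    have h6 := mul_le_mul_of_nonneg_right hcase (mul_nonneg ht0.le hV)
    nlinarith [mul_nonneg (sq_nonneg t) hV]

/-- **Oracle inequality.**  Let `F` be the bound-based objective (empirical IPS-α risk plus
the PAC-Bayes bound terms), let `Qhat ω` minimize `F ω ·` over all posteriors with finite KL
divergence to the prior, and let `Qstar` minimize the true risk over all posteriors.  Then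
with probability at least `1 − δ` over the logged data, the risk of the learned policy is
within twice the bound terms (evaluated at `Qstar`) of the optimal risk. -/
theorem pac_bayes_oracle_inequality
    {X : Type*} [MeasurableSpace X] {K : ℕ}
    {H : Type*} [MeasurableSpace H]
    (ν : Measure X) [IsProbabilityMeasure ν]
    (p0 c : X → Fin K → ℝ)
    (hp0meas : ∀ a, Measurable fun x => p0 x a)
    (hcmeas : ∀ a, Measurable fun x => c x a)
    (hp0pos : ∀ x a, 0 < p0 x a) (hp0sum : ∀ x, ∑ a, p0 x a = 1)
    (hc : ∀ x a, c x a ∈ Set.Icc (-1 : ℝ) 0)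
    (ev : H → X → Fin K)
    (hev : Measurable fun q : H × X => ev q.1 q.2)
    (κ0 : Kernel X (Fin K)) [IsMarkovKernel κ0]
    (hκ0 : ∀ x a, κ0 x {a} = ENNReal.ofReal (p0 x a))
    (P : Measure H) [IsProbabilityMeasure P]
    (lam : ℝ) (hlam : 0 < lam) (n : ℕ) (hn : 1 ≤ n)
    (δ : ℝ) (hδ : δ ∈ Set.Ioo (0 : ℝ) 1) (α : ℝ) (hα : α ∈ Set.Icc (0 : ℝ) 1)
    (Rk : Measure H → ℝ)
    (hRk : ∀ Q : Measure H, Rk Q = ∫ x, ∑ a, (Q {h | ev h x = a}).toReal * c x a ∂ν)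
    (F : (Fin n → X × Fin K) → Measure H → ℝ)
    (hF : ∀ ω (Q : Measure H), F ω Q =
      (n : ℝ)⁻¹ * (∑ i, c (ω i).1 (ω i).2 * (Q {h | ev h (ω i).1 = (ω i).2}).toReal
          / p0 (ω i).1 (ω i).2 ^ α)
        + Real.sqrt (((klDiv Q P).toReal + Real.log (4 * Real.sqrt n / δ)) / (2 * n))
        + (1 - (n : ℝ)⁻¹ * ∑ i, ∑ a,
            (Q {h | ev h (ω i).1 = a}).toReal * p0 (ω i).1 a ^ (1 - α))
        + ((klDiv Q P).toReal + Real.log (4 / δ)) / (n * lam)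
        + lam / 2 * ((n : ℝ)⁻¹ * ∑ i,
            ((∑ a, p0 (ω i).1 a *
                ((Q {h | ev h (ω i).1 = a}).toReal / p0 (ω i).1 a ^ (2 * α)))
              + (Q {h | ev h (ω i).1 = (ω i).2}).toReal * c (ω i).1 (ω i).2 ^ 2
                  / p0 (ω i).1 (ω i).2 ^ (2 * α))))
    (Qhat : (Fin n → X × Fin K) → Measure H)
    (hQhatProb : ∀ ω, IsProbabilityMeasure (Qhat ω))
    (hQhatKL : ∀ ω, klDiv (Qhat ω) P ≠ ⊤)
    (hQhatMin : ∀ ω (Q' : Measure H), IsProbabilityMeasure Q' → klDiv Q' P ≠ ⊤ →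
      F ω (Qhat ω) ≤ F ω Q')
    (Qstar : Measure H) [IsProbabilityMeasure Qstar] (hQstarKL : klDiv Qstar P ≠ ⊤)
    (hQstarMin : ∀ Q' : Measure H, IsProbabilityMeasure Q' → Rk Qstar ≤ Rk Q') :
    ENNReal.ofReal (1 - δ) ≤
      (Measure.pi fun _ : Fin n => ν ⊗ₘ κ0)
        {ω | Rk (Qhat ω) ≤ Rk Qstar
          + 2 * Real.sqrt (((klDiv Qstar P).toReal + Real.log (4 * Real.sqrt n / δ)) / (2 * n))
          + 2 * (1 - (n : ℝ)⁻¹ * ∑ i, ∑ a,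
              (Qstar {h | ev h (ω i).1 = a}).toReal * p0 (ω i).1 a ^ (1 - α))
          + 2 * ((klDiv Qstar P).toReal + Real.log (4 / δ)) / (n * lam)
          + lam * ((n : ℝ)⁻¹ * ∑ i,
              ((∑ a, p0 (ω i).1 a *
                  ((Qstar {h | ev h (ω i).1 = a}).toReal / p0 (ω i).1 a ^ (2 * α)))
                + (Qstar {h | ev h (ω i).1 = (ω i).2}).toReal * c (ω i).1 (ω i).2 ^ 2
                    / p0 (ω i).1 (ω i).2 ^ (2 * α)))} := by

  have hn0 : (0 : ℝ) < n := by exact_mod_cast hn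
  have hδ0 := hδ.1
  obtain ⟨N, hN, hlog⟩ := grid_num n hn
  have hN0 : (0 : ℝ) < N := by exact_mod_cast hN
  have hevx : ∀ x, Measurable fun h => ev h x := fun x => hev.comp (measurable_id.prodMk measurable_const)
  have hU1 := fun j : Fin N => upper1 ν p0 c hp0meas hcmeas hp0pos hp0sum hc ev hev κ0 hκ0 P n
    (4 * ((j : ℕ) + 1 / 2) / N) (δ / (2 * N)) (by positivity)
  choose B1 hB1m hB1p hB1 using hU1
  obtain ⟨B3, hB3m, hB3p, hB3⟩ := upper3 ν p0 c hp0meas hcmeas hp0pos hp0sum hc ev hev κ0 hκ0 P n α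
    (-lam) (δ / 4) (by positivity)
  obtain ⟨BL, hBLm, hBLp, hBL⟩ := lower_final ν p0 c hp0meas hcmeas hp0pos hp0sum hc ev hev κ0 hκ0 n hn
    α lam δ hlam hδ Qstar
  let B : Set (Fin n → X × Fin K) := (⋃ j, B1 j) ∪ (B3 ∪ BL)
  have hBm : MeasurableSet B := (MeasurableSet.iUnion hB1m).union (hB3m.union hBLm)
  have hBp : (Measure.pi fun _ : Fin n => ν ⊗ₘ κ0) B ≤ ENNReal.ofReal δ := by
    have hI : (Measure.pi fun _ : Fin n => ν ⊗ₘ κ0) (⋃ j, B1 j) ≤ ENNReal.ofReal (δ / 2) := by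
      refine (measure_iUnion_fintype_le _ _).trans ((Finset.sum_le_sum fun j _ => hB1p j).trans ?_)
      rw [Finset.sum_const, Finset.card_univ, Fintype.card_fin, nsmul_eq_mul,
        ← ENNReal.ofReal_natCast, ← ENNReal.ofReal_mul hN0.le]
      refine ENNReal.ofReal_le_ofReal (le_of_eq ?_)
      field_simp
    calc _ ≤ ENNReal.ofReal (δ / 2) + (ENNReal.ofReal (δ / 4) + ENNReal.ofReal (δ / 4)) :=
          (measure_union_le _ _).trans (add_le_add hI ((measure_union_le _ _).trans
            (add_le_add hB3p hBLp)))
      _ = ENNReal.ofReal δ := by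
        rw [← ENNReal.ofReal_add (by positivity) (by positivity),
          ← ENNReal.ofReal_add (by positivity) (by positivity)]
        congr 1; ring
  have hmain : ENNReal.ofReal (1 - δ) ≤ (Measure.pi fun _ : Fin n => ν ⊗ₘ κ0) Bᶜ := by
    rw [prob_compl_eq_one_sub hBm, ENNReal.ofReal_sub _ hδ0.le, ENNReal.ofReal_one]
    exact tsub_le_tsub_left hBp 1
  refine hmain.trans (measure_mono fun ω hω => ?_)
  simp only [B, Set.mem_compl_iff, Set.mem_union, Set.mem_iUnion, not_or, not_exists] at hω
  obtain ⟨hω1, hω3, hωL⟩ := hω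
  simp only [Set.mem_setOf_eq]
  -- bias facts for an arbitrary posterior
  have hbias : ∀ Q : Measure H, IsProbabilityMeasure Q →
      ((n : ℝ)⁻¹ * (∑ i, ∑ a, (Q {h | ev h (ω i).1 = a}).toReal * c (ω i).1 a)
        ≤ (n : ℝ)⁻¹ * (∑ i, ∑ a, c (ω i).1 a * (Q {h | ev h (ω i).1 = a}).toReal
              * p0 (ω i).1 a ^ (1 - α))) ∧
      ((n : ℝ)⁻¹ * (∑ i, ∑ a, c (ω i).1 a * (Q {h | ev h (ω i).1 = a}).toReal
              * p0 (ω i).1 a ^ (1 - α)) ≤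
        (n : ℝ)⁻¹ * (∑ i, ∑ a, (Q {h | ev h (ω i).1 = a}).toReal * c (ω i).1 a)
        + (1 - (n : ℝ)⁻¹ * ∑ i, ∑ a,
            (Q {h | ev h (ω i).1 = a}).toReal * p0 (ω i).1 a ^ (1 - α))) ∧
      0 ≤ 1 - (n : ℝ)⁻¹ * ∑ i, ∑ a,
            (Q {h | ev h (ω i).1 = a}).toReal * p0 (ω i).1 a ^ (1 - α) := by
    intro Q hQ
    have hb := fun i => bias_bounds (p0 (ω i).1) (c (ω i).1)
      (fun a => (Q {h | ev h (ω i).1 = a}).toReal) α hα (hp0pos _) (hp0sum _) (hc _)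
      (fun a => (pi_mem Q _).1) (pi_sum Q _ (hevx _))
    have e1 : (1 : ℝ) = (n : ℝ)⁻¹ * ∑ i : Fin n, (1 : ℝ) := by simp; field_simp
    have hni : (0 : ℝ) ≤ (n : ℝ)⁻¹ := by positivity
    refine ⟨mul_le_mul_of_nonneg_left (Finset.sum_le_sum fun i _ => (hb i).1) hni, ?_, ?_⟩
    · nth_rewrite 2 [e1]
      rw [← mul_sub, ← mul_add, ← Finset.sum_sub_distrib, ← Finset.sum_add_distrib]
      exact mul_le_mul_of_nonneg_left (Finset.sum_le_sum fun i _ => (hb i).2.1) hni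
    · nth_rewrite 1 [e1]
      rw [← mul_sub, ← Finset.sum_sub_distrib]
      exact mul_nonneg hni (Finset.sum_nonneg fun i _ => (hb i).2.2)
  -- upper bound for the learned posterior
  have hupper : Rk (Qhat ω) ≤ F ω (Qhat ω) := by
    have hQ := hQhatProb ω
    have hkl := hQhatKL ω
    have hb := hbias (Qhat ω) hQ
    have h3 := hB3 ω hω3 (Qhat ω) hQ hkl
    have h1 := fun j => hB1 j ω (hω1 j) (Qhat ω) hQ hkl
    rw [hF]
    generalize Qhat ω = Q at *
    simp_rw [← hRk] at h1
    rw [g3_sum (fun i => p0 (ω i).1) (fun i => c (ω i).1)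
      (fun i b => (Q {h | ev h (ω i).1 = b}).toReal) (fun i => (ω i).2), one_div_div] at h3
    have hRk0 : Rk Q ≤ 0 := by
      rw [hRk]
      exact integral_nonpos fun x => Finset.sum_nonpos fun a _ =>
        mul_nonpos_of_nonneg_of_nonpos (pi_mem Q _).1 (hc x a).2
    have hS1 : -1 ≤ (n : ℝ)⁻¹ * (∑ i, ∑ a, (Q {h | ev h (ω i).1 = a}).toReal * c (ω i).1 a) := by
      have e1 : (-1 : ℝ) = (n : ℝ)⁻¹ * ∑ i : Fin n, (-1 : ℝ) := by simp; field_simp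
      rw [e1]
      refine mul_le_mul_of_nonneg_left (Finset.sum_le_sum fun i _ => ?_) (by positivity)
      rw [← pi_sum Q _ (hevx (ω i).1), ← Finset.sum_neg_distrib]
      refine Finset.sum_le_sum fun a _ => ?_
      nlinarith [(pi_mem Q {h | ev h (ω i).1 = a}).1, (hc (ω i).1 a).1]
    have h1' := upper1_det n N hn hN δ hδ0 hlog
      (Rk Q - (n : ℝ)⁻¹ * (∑ i, ∑ a, (Q {h | ev h (ω i).1 = a}).toReal * c (ω i).1 a))
      (klDiv Q P).toReal (by linarith) (fun j => by
        refine le_trans (le_of_eq ?_) (h1 j)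
        rw [Finset.sum_sub_distrib, ← Finset.mul_sum, Finset.sum_sub_distrib]
        simp only [Finset.sum_const, Finset.card_univ, Fintype.card_fin, nsmul_eq_mul]
        field_simp)
    have h3' : (n : ℝ)⁻¹ * (∑ i, ∑ a, c (ω i).1 a * (Q {h | ev h (ω i).1 = a}).toReal
              * p0 (ω i).1 a ^ (1 - α))
        - (n : ℝ)⁻¹ * (∑ i, c (ω i).1 (ω i).2 * (Q {h | ev h (ω i).1 = (ω i).2}).toReal
          / p0 (ω i).1 (ω i).2 ^ α)
        ≤ ((klDiv Q P).toReal + Real.log (4 / δ)) / (n * lam)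
        + lam / 2 * ((n : ℝ)⁻¹ * ∑ i,
            ((∑ a, p0 (ω i).1 a *
                ((Q {h | ev h (ω i).1 = a}).toReal / p0 (ω i).1 a ^ (2 * α)))
              + (Q {h | ev h (ω i).1 = (ω i).2}).toReal * c (ω i).1 (ω i).2 ^ 2
                  / p0 (ω i).1 (ω i).2 ^ (2 * α))) := by
      generalize (∑ i, c (ω i).1 (ω i).2 * (Q {h | ev h (ω i).1 = (ω i).2}).toReal
              / p0 (ω i).1 (ω i).2 ^ α) = S2 at h3 ⊢
      generalize (∑ i, ∑ a, c (ω i).1 a * (Q {h | ev h (ω i).1 = a}).toReal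
              * p0 (ω i).1 a ^ (1 - α)) = S3 at h3 ⊢
      generalize (∑ i, ((∑ a, p0 (ω i).1 a *
                ((Q {h | ev h (ω i).1 = a}).toReal / p0 (ω i).1 a ^ (2 * α)))
              + (Q {h | ev h (ω i).1 = (ω i).2}).toReal * c (ω i).1 (ω i).2 ^ 2
                  / p0 (ω i).1 (ω i).2 ^ (2 * α))) = V at h3 ⊢
      have hnl : 0 < n * lam := by positivity
      refine le_of_mul_le_mul_left ?_ hnl
      have e1 : n * lam * ((n : ℝ)⁻¹ * S3 - (n : ℝ)⁻¹ * S2) = lam * (S3 - S2) := by field_simp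
      have e2 : n * lam * (((klDiv Q P).toReal + Real.log (4 / δ)) / (n * lam)
          + lam / 2 * ((n : ℝ)⁻¹ * V))
          = (klDiv Q P).toReal + Real.log (4 / δ) + lam ^ 2 / 2 * V := by field_simp
      rw [e1, e2]
      linarith
    linarith [hb.1, hb.2.2]
  have hmin := hQhatMin ω Qstar inferInstance hQstarKL
  refine (hupper.trans hmin).trans ?_
  have hb := hbias Qstar inferInstance
  have hl := hBL ω hωL
  rw [hF, hRk Qstar]
  have hk : 0 ≤ (klDiv Qstar P).toReal := ENNReal.toReal_nonneg
  have hsq : Real.sqrt (Real.log (4 * Real.sqrt n / δ) / (2 * n)) ≤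
      Real.sqrt (((klDiv Qstar P).toReal + Real.log (4 * Real.sqrt n / δ)) / (2 * n)) := by
    apply Real.sqrt_le_sqrt
    gcongr
    linarith
  have hlg : Real.log (4 / δ) / (n * lam) ≤
      ((klDiv Qstar P).toReal + Real.log (4 / δ)) / (n * lam) := by
    gcongr
    linarith
  rw [mul_div_assoc 2]
  linarith [hb.2.1]
end

section
/- (Oracle inequality for Gaussian linear policies under uniform logging) Assume the logging policy is uniform: π0(a|x) = 1/K for all (x,a). Let φ : X → R^d be a measurable feature map and, for θ = (θ_a)_{a∈A} ∈ R^{dK}, let h_θ(x) = argmax_{a∈A} φ(x)ᵀθ_a (with a fixed measurable tie-breaking rule). Let the prior be P = N(μ0, I_{dK}) and consider posteriors Q_μ = N(μ, I_{dK}), μ ∈ R^{dK}, with induced policies π_{Q_μ}(a|x) = Q_μ({θ : h_θ(x) = a}). Let n ≥ 1, δ ∈ (0,1), α ∈ [0,1], λ = 1/√n. Suppose μ̂ minimizes μ ↦ R̂_n^α(π_{Q_μ}) + √(KL1(π_{Q_μ})/(2n)) + B_n^α(π_{Q_μ}) + KL2(π_{Q_μ})/(nλ) + (λ/2)V̄_n^α(π_{Q_μ})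 and μ_* minimizes μ ↦ R(π_{Q_μ}). Then with probability at least 1−δ over draws of D_n: R(π_{Q_{μ̂}}) ≤ R(π_{Q_{μ_*}}) + √(‖μ_*−μ0‖² + 2·log(4√n/δ))/√n + 2(1 − K^{α−1}) + (‖μ_*−μ0‖² + 2·log(4/δ))/√n + (K^{2α−1} + K^{2α})/√n. -/
open MeasureTheory ProbabilityTheory Real

lemma exp_sub_sq_le (x : ℝ) : Real.exp (x - x ^ 2 / 2) ≤ 1 + x + x ^ 2 / 2 := by
  have hpos : ∀ y : ℝ, 0 < 1 + y + y ^ 2 / 2 := fun y => by nlinarith [sq_nonneg (y + 1)]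
  -- g y = (1 + y + y²/2) * exp (-(y - y²/2)) has its minimum at 0
  let g : ℝ → ℝ := fun y => (1 + y + y ^ 2 / 2) * Real.exp (-(y - y ^ 2 / 2))
  have hd : ∀ y, HasDerivAt g (y * (1 + y / 2 + y ^ 2 / 2) * Real.exp (-(y - y ^ 2 / 2))) y := by
    intro y
    have h1 : HasDerivAt (fun y : ℝ => 1 + y + y ^ 2 / 2) (1 + y) y := by
      have := ((hasDerivAt_id y).const_add 1).add (((hasDerivAt_id y).pow 2).div_const 2)
      refine HasDerivAt.congr_deriv this ?_
      simp; 
    have h2 : HasDerivAt (fun y : ℝ => -(y - y ^ 2 / 2)) (-(1 - y)) y := by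
      have := ((hasDerivAt_id y).sub (((hasDerivAt_id y).pow 2).div_const 2)).neg
      refine HasDerivAt.congr_deriv this ?_
      simp; 
    refine HasDerivAt.congr_deriv (h1.mul h2.exp) ?_
    ring
  have hq : ∀ y : ℝ, 0 < 1 + y / 2 + y ^ 2 / 2 := fun y => by nlinarith [sq_nonneg (y + 1)]
  have hcont : Continuous g := by fun_prop
  have key : g 0 ≤ g x := by
    rcases le_total 0 x with hx | hx
    · have hm : MonotoneOn g (Set.Ici 0) := by
        refine monotoneOn_of_deriv_nonneg (convex_Ici 0) hcont.continuousOn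
          (fun y _ => (hd y).differentiableAt.differentiableWithinAt) ?_
        intro y hy
        rw [interior_Ici] at hy
        rw [(hd y).deriv]
        exact mul_nonneg (mul_nonneg (le_of_lt hy) (hq y).le) (Real.exp_pos _).le
      exact hm (by simp) hx hx
    · have hm : AntitoneOn g (Set.Iic 0) := by
        refine antitoneOn_of_deriv_nonpos (convex_Iic 0) hcont.continuousOn
          (fun y _ => (hd y).differentiableAt.differentiableWithinAt) ?_
        intro y hy
        rw [interior_Iic] at hy
        rw [(hd y).deriv]
        exact mul_nonpos_of_nonpos_of_nonneg
          (mul_nonpos_of_nonpos_of_nonneg (le_of_lt hy) (hq y).le) (Real.exp_pos _).le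
      exact hm hx (by simp) hx
  have h0 : g 0 = 1 := by simp [g]
  rw [h0] at key
  have := mul_le_mul_of_nonneg_right key (Real.exp_pos (x - x ^ 2 / 2)).le
  simp only [g, one_mul] at this
  rwa [mul_assoc, ← Real.exp_add, neg_add_cancel, Real.exp_zero, mul_one] at this

lemma pi_withDensity_aux {ι : Type*} [Fintype ι] {E : ι → Type*} [∀ i, MeasurableSpace (E i)]
    (μ ρ : (i : ι) → Measure (E i)) [∀ i, IsProbabilityMeasure (μ i)]
    [∀ i, IsProbabilityMeasure (ρ i)]
    (g : (i : ι) → E i → ℝ) (hg : ∀ i, Measurable (g i)) (hpos : ∀ i x, 0 ≤ g i x)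
    (h : ∀ i, ρ i = (μ i).withDensity (fun x => ENNReal.ofReal (g i x))) :
    Measure.pi ρ = (Measure.pi μ).withDensity (fun x => ENNReal.ofReal (∏ i, g i (x i))) := by
  have hint : ∀ i, Integrable (g i) (μ i) := by
    intro i
    refine ⟨(hg i).aestronglyMeasurable, ?_⟩
    rw [hasFiniteIntegral_iff_ofReal (Filter.Eventually.of_forall (hpos i)),
      ← setLIntegral_univ, ← withDensity_apply _ MeasurableSet.univ, ← h]
    simp
  refine Measure.pi_eq ?_
  intro s hs
  rw [withDensity_apply _ (MeasurableSet.univ_pi hs), Measure.restrict_pi_pi,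
    ← ofReal_integral_eq_lintegral_ofReal, integral_fintype_prod_eq_prod,
    ENNReal.ofReal_prod_of_nonneg]
  · refine Finset.prod_congr rfl fun i _ => ?_
    rw [h i, withDensity_apply _ (hs i), ofReal_integral_eq_lintegral_ofReal]
    · exact (hint i).integrableOn
    · exact Filter.Eventually.of_forall (hpos i)
  · intro i _
    exact integral_nonneg (hpos i)
  · exact Integrable.fintype_prod_dep fun i => (hint i).integrableOn
  · exact Filter.Eventually.of_forall fun x => Finset.prod_nonneg fun i _ => hpos i _

lemma gaussian_withDensity_aux (m m0 : ℝ) :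
    gaussianReal m 1 = (gaussianReal m0 1).withDensity
      (fun x => ENNReal.ofReal (Real.exp ((m - m0) * x - (m ^ 2 - m0 ^ 2) / 2))) := by
  rw [gaussianReal_of_var_ne_zero _ one_ne_zero, gaussianReal_of_var_ne_zero _ one_ne_zero,
    ← withDensity_mul _ (measurable_gaussianPDF _ _) (by fun_prop)]
  congr 1
  ext x
  simp only [Pi.mul_apply, gaussianPDF]
  rw [← ENNReal.ofReal_mul (gaussianPDFReal_nonneg _ _ _)]
  congr 1
  simp only [gaussianPDFReal]
  rw [mul_assoc _ (Real.exp _) (Real.exp _), ← Real.exp_add]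
  congr 2
  simp; ring

lemma gaussian_pi_aux {d K : ℕ} (m m0 : Fin K → Fin d → ℝ) :
    (Measure.pi fun a => Measure.pi fun j => gaussianReal (m a j) 1) =
      (Measure.pi fun a => Measure.pi fun j => gaussianReal (m0 a j) 1).withDensity
      (fun θ => ENNReal.ofReal (Real.exp (∑ a, ∑ j,
        ((m a j - m0 a j) * θ a j - (m a j ^ 2 - m0 a j ^ 2) / 2)))) := by
  rw [pi_withDensity_aux (fun a => Measure.pi fun j => gaussianReal (m0 a j) 1)
    (fun a => Measure.pi fun j => gaussianReal (m a j) 1)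
    (fun a θ => ∏ j, Real.exp ((m a j - m0 a j) * θ j - (m a j ^ 2 - m0 a j ^ 2) / 2))]
  · simp only [Real.exp_sum]
  · intro a; fun_prop
  · intro a x; positivity
  · intro a
    exact pi_withDensity_aux (fun j => gaussianReal (m0 a j) 1) (fun j => gaussianReal (m a j) 1)
      (fun j x => Real.exp ((m a j - m0 a j) * x - (m a j ^ 2 - m0 a j ^ 2) / 2))
      (fun j => by fun_prop) (fun j x => by positivity)
      (fun j => gaussian_withDensity_aux _ _)

lemma gaussian_kl_aux {d K : ℕ} (m m0 : Fin K → Fin d → ℝ)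
    (Q P : Measure (Fin K → Fin d → ℝ))
    (hQ : Q = Measure.pi fun a => Measure.pi fun j => gaussianReal (m a j) 1)
    (hP : P = Measure.pi fun a => Measure.pi fun j => gaussianReal (m0 a j) 1) :
    Q ≪ P ∧ Integrable (llr Q P) Q ∧
      ∫ θ, llr Q P θ ∂Q = (∑ a, ∑ j, (m a j - m0 a j) ^ 2) / 2 := by
  have hPp : IsProbabilityMeasure P := by rw [hP]; infer_instance
  have hQp : IsProbabilityMeasure Q := by rw [hQ]; infer_instance
  set L : (Fin K → Fin d → ℝ) → ℝ := fun θ => ∑ a, ∑ j,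
        ((m a j - m0 a j) * θ a j - (m a j ^ 2 - m0 a j ^ 2) / 2) with hL
  have hLm : Measurable L := by fun_prop
  have hwd : Q = P.withDensity (fun θ => ENNReal.ofReal (Real.exp (L θ))) := by
    rw [hQ, hP]; exact gaussian_pi_aux m m0
  have hac : Q ≪ P := by rw [hwd]; exact withDensity_absolutelyContinuous _ _
  have hllr : llr Q P =ᵐ[Q] L := by
    have : Q.rnDeriv P =ᵐ[P] fun θ => ENNReal.ofReal (Real.exp (L θ)) := by
      conv_lhs => rw [hwd]
      exact Measure.rnDeriv_withDensity _ (by fun_prop)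
    filter_upwards [hac this] with θ hθ
    simp only [llr]
    rw [hθ, ENNReal.toReal_ofReal (Real.exp_pos _).le, Real.log_exp]
  have hmp : ∀ a j, MeasurePreserving (fun θ : Fin K → Fin d → ℝ => θ a j) Q
      (gaussianReal (m a j) 1) := by
    intro a j
    have h1 := measurePreserving_eval (fun a => Measure.pi fun j => gaussianReal (m a j) 1) a
    have h2 := measurePreserving_eval (fun j => gaussianReal (m a j) 1) j
    rw [hQ]
    exact h2.comp h1
  have hid : ∀ a j, Integrable (fun x : ℝ => x) (gaussianReal (m a j) 1) := fun a j =>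
    (memLp_id_gaussianReal (μ := m a j) (v := 1) 1).integrable (by simp)
  have hi : ∀ a j, Integrable (fun θ : Fin K → Fin d → ℝ => θ a j) Q := fun a j =>
    (hmp a j).integrable_comp_of_integrable (hid a j)
  have hv : ∀ a j, ∫ θ, θ a j ∂Q = m a j := by
    intro a j
    have := (hmp a j).map_eq
    rw [← integral_id_gaussianReal (μ := m a j) (v := 1), ← this, integral_map]
    · exact (hmp a j).measurable.aemeasurable
    · exact measurable_id.aestronglyMeasurable
  have hterm : ∀ a j, Integrable (fun θ : Fin K → Fin d → ℝ =>
      (m a j - m0 a j) * θ a j - (m a j ^ 2 - m0 a j ^ 2) / 2) Q := fun a j =>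
    ((hi a j).const_mul _).sub (integrable_const _)
  have hLi : Integrable L Q :=
    integrable_finsetSum _ fun a _ => integrable_finsetSum _ fun j _ => hterm a j
  refine ⟨hac, (integrable_congr hllr).2 hLi, ?_⟩
  rw [integral_congr_ae hllr, hL, integral_finsetSum _
    (fun a _ => integrable_finsetSum _ fun j _ => hterm a j), Finset.sum_div]
  refine Finset.sum_congr rfl fun a _ => ?_
  rw [integral_finsetSum _ (fun j _ => hterm a j), Finset.sum_div]
  refine Finset.sum_congr rfl fun j _ => ?_
  rw [integral_sub ((hi a j).const_mul _) (integrable_const _), integral_const_mul, hv]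
  simp
  ring

lemma dv_aux {Θ : Type*} [MeasurableSpace Θ] (Q P : Measure Θ) [IsProbabilityMeasure Q]
    [IsProbabilityMeasure P] (hac : Q ≪ P) (hi : Integrable (llr Q P) Q)
    (f : Θ → ℝ) (hf : Measurable f) (C : ℝ) (hC : ∀ θ, |f θ| ≤ C) :
    ∫ θ, f θ ∂Q ≤ ∫ θ, llr Q P θ ∂Q + Real.log (∫ θ, Real.exp (f θ) ∂P) := by
  have hfQ : Integrable f Q := Integrable.of_bound hf.aestronglyMeasurable C
    (Filter.Eventually.of_forall hC)
  have hfP : Integrable (fun θ => Real.exp (f θ)) P := by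
    refine Integrable.of_bound (by fun_prop) (Real.exp C) (Filter.Eventually.of_forall ?_)
    intro θ
    rw [Real.norm_eq_abs, Real.abs_exp]
    exact Real.exp_le_exp.2 ((abs_le.1 (hC θ)).2)
  have h1 := integral_llr_tilted_right hac hfQ hfP hi
  have hac' : Q ≪ P.tilted f := hac.trans (absolutelyContinuous_tilted hfP)
  have hi' := integrable_llr_tilted_right hac hfQ hi hfP
  have : IsProbabilityMeasure (P.tilted f) := isProbabilityMeasure_tilted hfP
  have h2 := InformationTheory.integral_llr_add_sub_measure_univ_nonneg hac' hi'
  simp at h2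
  linarith

lemma pac_bayes_aux {Z Θ : Type*} [MeasurableSpace Z] [MeasurableSpace Θ]
    (ρ : Measure Z) [IsProbabilityMeasure ρ] (P : Measure Θ) [IsProbabilityMeasure P]
    (n : ℕ) (x : Z → Θ → ℝ) (hx : Measurable fun q : Z × Θ => x q.1 q.2)
    (C : ℝ) (hC : ∀ z θ, |x z θ| ≤ C) (v : ℝ) (hv : ∀ θ, ∫ z, (x z θ) ^ 2 ∂ρ ≤ v)
    (ε : ℝ) (hε : 0 < ε) :
    ∃ B : Set (Fin n → Z), MeasurableSet B ∧ (Measure.pi fun _ : Fin n => ρ) B ≤ ENNReal.ofReal ε ∧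
      ∀ ω ∉ B, ∀ Q : Measure Θ, IsProbabilityMeasure Q → Q ≪ P → Integrable (llr Q P) Q →
        (∑ i, ∫ θ, (x (ω i) θ - (x (ω i) θ) ^ 2 / 2) ∂Q) - n * ((∫ θ, ∫ z, x z θ ∂ρ ∂Q) + v / 2)
          ≤ ∫ θ, llr Q P θ ∂Q + Real.log (1 / ε) := by
  have hPne : P ≠ 0 := IsProbabilityMeasure.ne_zero P
  obtain ⟨θ0⟩ : Nonempty Θ := by
    by_contra hne
    rw [not_nonempty_iff] at hne
    exact hPne (Measure.eq_zero_of_isEmpty P)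
  have hx1 : ∀ z, Measurable (x z) := fun z => hx.comp measurable_prodMk_left
  have hx2 : ∀ θ, Measurable (fun z => x z θ) := fun θ => hx.comp measurable_prodMk_right
  set e : Θ → ℝ := fun θ => ∫ z, x z θ ∂ρ with he
  have hem : Measurable e := by
    have : StronglyMeasurable fun q : Z × Θ => x q.1 q.2 := hx.stronglyMeasurable
    exact this.integral_prod_left'.measurable
  have hxi : ∀ θ, Integrable (fun z => x z θ) ρ := fun θ =>
    Integrable.of_bound (hx2 θ).aestronglyMeasurable C (Filter.Eventually.of_forall fun z => hC z θ)
  have hsq : ∀ z θ, (x z θ) ^ 2 ≤ C ^ 2 := fun z θ => sq_le_sq' (by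
    have := (abs_le.1 (hC z θ)).1; linarith) (abs_le.1 (hC z θ)).2
  have hxi2 : ∀ θ, Integrable (fun z => (x z θ) ^ 2) ρ := fun θ =>
    Integrable.of_bound ((hx2 θ).pow_const 2).aestronglyMeasurable (C ^ 2)
      (Filter.Eventually.of_forall fun z => by
        rw [Real.norm_eq_abs, abs_of_nonneg (sq_nonneg _)]; exact hsq z θ)
  have hv0 : 0 ≤ v := (integral_nonneg fun z => sq_nonneg _).trans (hv θ0)
  have heC : ∀ θ, |e θ| ≤ C := by
    intro θ
    have := norm_integral_le_of_norm_le_const (μ := ρ) (f := fun z => x z θ) (C := C)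
      (Filter.Eventually.of_forall fun z => hC z θ)
    simpa using this
  set y : Z → Θ → ℝ := fun z θ => x z θ - (x z θ) ^ 2 / 2 - (e θ + v / 2) with hy
  have hym : Measurable fun q : Z × Θ => y q.1 q.2 := by
    have : Measurable fun q : Z × Θ => e q.2 := hem.comp measurable_snd
    fun_prop
  have hy1 : ∀ z, Measurable (y z) := fun z => hym.comp measurable_prodMk_left
  have hy2 : ∀ θ, Measurable (fun z => y z θ) := fun θ => hym.comp measurable_prodMk_right
  set D : ℝ := C + C ^ 2 / 2 + C + v / 2 with hD
  have hyD : ∀ z θ, |y z θ| ≤ D := by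
    intro z θ
    have h1 := abs_le.1 (hC z θ)
    have h2 := abs_le.1 (heC θ)
    have h3 := hsq z θ
    have h4 := sq_nonneg (x z θ)
    rw [abs_le]
    constructor <;> simp only [hy, hD] <;> nlinarith
  have hyexp : ∀ θ, ∫ z, Real.exp (y z θ) ∂ρ ≤ 1 := by
    intro θ
    have hle : ∀ z, Real.exp (y z θ) ≤
        (1 + x z θ + (x z θ) ^ 2 / 2) * Real.exp (-(e θ + v / 2)) := by
      intro z
      simp only [hy]
      rw [sub_eq_add_neg _ (e θ + v / 2), Real.exp_add]
      exact mul_le_mul_of_nonneg_right (exp_sub_sq_le _) (Real.exp_pos _).le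
    have hint1 : Integrable (fun z => Real.exp (y z θ)) ρ := by
      refine Integrable.of_bound (hy2 θ).exp.aestronglyMeasurable (Real.exp D)
        (Filter.Eventually.of_forall fun z => ?_)
      rw [Real.norm_eq_abs, Real.abs_exp]
      exact Real.exp_le_exp.2 ((abs_le.1 (hyD z θ)).2)
    have hint2 : Integrable (fun z => 1 + x z θ + (x z θ) ^ 2 / 2) ρ :=
      ((integrable_const 1).add (hxi θ)).add ((hxi2 θ).div_const 2)
    calc ∫ z, Real.exp (y z θ) ∂ρ
        ≤ ∫ z, (1 + x z θ + (x z θ) ^ 2 / 2) * Real.exp (-(e θ + v / 2)) ∂ρ :=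
          integral_mono hint1 (hint2.mul_const _) hle
      _ = (1 + e θ + (∫ z, (x z θ) ^ 2 ∂ρ) / 2) * Real.exp (-(e θ + v / 2)) := by
          have hi0 : Integrable (fun z => 1 + x z θ) ρ := (integrable_const 1).add (hxi θ)
          rw [integral_mul_const, integral_add hi0
            ((hxi2 θ).div_const 2), integral_add (integrable_const 1) (hxi θ), integral_div]
          simp [he]
      _ ≤ Real.exp (e θ + v / 2) * Real.exp (-(e θ + v / 2)) := by
          refine mul_le_mul_of_nonneg_right ?_ (Real.exp_pos _).le
          have := Real.add_one_le_exp (e θ + v / 2)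
          have := hv θ
          linarith
      _ = 1 := by rw [← Real.exp_add]; simp
  set f : (Fin n → Z) → Θ → ℝ := fun ω θ => ∑ i, y (ω i) θ with hf
  have hfm : Measurable fun q : (Fin n → Z) × Θ => f q.1 q.2 := by
    refine Finset.measurable_fun_sum _ fun i _ => ?_
    exact hym.comp (f := fun q : (Fin n → Z) × Θ => (q.1 i, q.2)) (by fun_prop)
  have hf1 : ∀ ω, Measurable (f ω) := fun ω => hfm.comp measurable_prodMk_left
  have hfD : ∀ ω θ, |f ω θ| ≤ n * D := by
    intro ω θ
    refine (Finset.abs_sum_le_sum_abs _ _).trans ?_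
    refine (Finset.sum_le_sum fun i _ => hyD (ω i) θ).trans ?_
    simp
  set W : (Fin n → Z) → ENNReal := fun ω => ∫⁻ θ, ENNReal.ofReal (Real.exp (f ω θ)) ∂P with hW
  have hjm : Measurable fun q : (Fin n → Z) × Θ => ENNReal.ofReal (Real.exp (f q.1 q.2)) :=
    hfm.exp.ennreal_ofReal
  have hWm : Measurable W := hjm.lintegral_prod_right'
  have hWle : ∫⁻ ω, W ω ∂(Measure.pi fun _ : Fin n => ρ) ≤ 1 := by
    simp only [hW]
    rw [lintegral_lintegral_swap hjm.aemeasurable]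
    calc _ ≤ ∫⁻ θ, 1 ∂P := by
          refine lintegral_mono fun θ => ?_
          have hfi : Integrable (fun ω => Real.exp (f ω θ)) (Measure.pi fun _ : Fin n => ρ) := by
            have hm : Measurable fun ω => f ω θ := hfm.comp measurable_prodMk_right
            refine Integrable.of_bound hm.exp.aestronglyMeasurable (Real.exp (n * D))
              (Filter.Eventually.of_forall fun ω => ?_)
            rw [Real.norm_eq_abs, Real.abs_exp]
            exact Real.exp_le_exp.2 ((abs_le.1 (hfD ω θ)).2)
          rw [← ofReal_integral_eq_lintegral_ofReal hfi
            (Filter.Eventually.of_forall fun ω => (Real.exp_pos _).le)]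
          refine ENNReal.ofReal_le_one.2 ?_
          simp only [hf, Real.exp_sum]
          rw [integral_fintype_prod_eq_prod (fun (_ : Fin n) z => Real.exp (y z θ))]
          exact Finset.prod_le_one (fun i _ => integral_nonneg fun z => (Real.exp_pos _).le)
            (fun i _ => hyexp θ)
      _ = 1 := by simp
  refine ⟨{ω | ENNReal.ofReal (1 / ε) ≤ W ω}, measurableSet_le measurable_const hWm, ?_, ?_⟩
  · refine (meas_ge_le_lintegral_div hWm.aemeasurable ?_ ENNReal.ofReal_ne_top).trans ?_
    · simpa using hε
    · refine (ENNReal.div_le_div_right hWle _).trans ?_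
      rw [one_div, one_div, ENNReal.ofReal_inv_of_pos hε, inv_inv]
  · intro ω hω Q hQ hac hi
    have hdv := dv_aux Q P hac hi (f ω) (hf1 ω) _ (hfD ω)
    have hexpi : Integrable (fun θ => Real.exp (f ω θ)) P := by
      refine Integrable.of_bound (hf1 ω).exp.aestronglyMeasurable (Real.exp (n * D))
        (Filter.Eventually.of_forall fun θ => ?_)
      rw [Real.norm_eq_abs, Real.abs_exp]
      exact Real.exp_le_exp.2 ((abs_le.1 (hfD ω θ)).2)
    have hW2 : ∫ θ, Real.exp (f ω θ) ∂P ≤ 1 / ε := by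
      simp only [Set.mem_ofPred_eq, not_le, hW] at hω
      rw [← ofReal_integral_eq_lintegral_ofReal hexpi
            (Filter.Eventually.of_forall fun ω => (Real.exp_pos _).le)] at hω
      exact ((ENNReal.ofReal_lt_ofReal_iff (by positivity)).1 hω).le
    have hlog : Real.log (∫ θ, Real.exp (f ω θ) ∂P) ≤ Real.log (1 / ε) :=
      Real.log_le_log (integral_exp_pos hexpi) hW2
    have hxQ : ∀ z, Integrable (fun θ => x z θ - (x z θ) ^ 2 / 2) Q := by
      intro z
      refine (Integrable.of_bound (hx1 z).aestronglyMeasurable C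
        (Filter.Eventually.of_forall fun θ => hC z θ)).sub
        (Integrable.div_const (Integrable.of_bound ((hx1 z).pow_const 2).aestronglyMeasurable
          (C ^ 2) (Filter.Eventually.of_forall fun θ => ?_)) 2)
      rw [Real.norm_eq_abs, abs_of_nonneg (sq_nonneg _)]; exact hsq z θ
    have heQ : Integrable e Q := Integrable.of_bound hem.aestronglyMeasurable C
      (Filter.Eventually.of_forall heC)
    have hyQ : ∀ z, ∫ θ, y z θ ∂Q = ∫ θ, (x z θ - (x z θ) ^ 2 / 2) ∂Q
        - ((∫ θ, e θ ∂Q) + v / 2) := by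
      intro z
      simp only [hy]
      have hi0 : Integrable (fun θ => e θ + v / 2) Q := heQ.add (integrable_const _)
      rw [integral_sub (hxQ z) hi0,
        integral_add heQ (integrable_const _)]
      simp
    have hfQ : ∫ θ, f ω θ ∂Q = (∑ i, ∫ θ, (x (ω i) θ - (x (ω i) θ) ^ 2 / 2) ∂Q)
        - n * ((∫ θ, e θ ∂Q) + v / 2) := by
      simp only [hf]
      rw [integral_finsetSum _ fun i _ => Integrable.of_bound (hy1 (ω i)).aestronglyMeasurable D
        (Filter.Eventually.of_forall fun θ => hyD _ θ)]
      simp only [hyQ, Finset.sum_sub_distrib]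
      simp
      ring
    rw [hfQ] at hdv
    linarith

set_option maxHeartbeats 4000000

/-- **Oracle inequality for Gaussian linear policies under uniform logging.**  The prior is
`N(μ0, I_{dK})`, posteriors are `N(μ, I_{dK})` over linear argmax hypotheses
`h_θ(x) = argmax_a ⟪φ(x), θ_a⟫`, the logging policy is uniform and `λ = 1/√n`.  If `μhat`
minimizes the bound-based objective `F` and `μstar` minimizes the risk over the Gaussian
family, then with probability at least `1 − δ` over the logged data, the risk of the learned
policy is within explicit terms of the optimal risk. -/
theorem oracle_inequality_gaussian_uniform_logging
    {X : Type*} [MeasurableSpace X] {d K : ℕ} (hK : 0 < K)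
    (ν : Measure X) [IsProbabilityMeasure ν]
    (c : X → Fin K → ℝ)
    (hcmeas : ∀ a, Measurable fun x => c x a)
    (hc : ∀ x a, c x a ∈ Set.Icc (-1 : ℝ) 0)
    (φ : X → Fin d → ℝ) (hφ : Measurable φ)
    (p0 : X → Fin K → ℝ) (huniform : ∀ x a, p0 x a = (K : ℝ)⁻¹)
    (κ0 : Kernel X (Fin K)) [IsMarkovKernel κ0]
    (hκ0 : ∀ x a, κ0 x {a} = ENNReal.ofReal (p0 x a))
    (ev : (Fin K → Fin d → ℝ) → X → Fin K)
    (hev : Measurable fun q : (Fin K → Fin d → ℝ) × X => ev q.1 q.2)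
    (hargmax : ∀ (θ : Fin K → Fin d → ℝ) (x : X) (a : Fin K),
      ∑ j, φ x j * θ a j ≤ ∑ j, φ x j * θ (ev θ x) j)
    (G : (Fin K → Fin d → ℝ) → Measure (Fin K → Fin d → ℝ))
    (hG : ∀ μm : Fin K → Fin d → ℝ,
      G μm = Measure.pi fun a => Measure.pi fun j => gaussianReal (μm a j) 1)
    (μ0 : Fin K → Fin d → ℝ)
    (n : ℕ) (hn : 1 ≤ n) (δ : ℝ) (hδ : δ ∈ Set.Ioo (0 : ℝ) 1)
    (α : ℝ) (hα : α ∈ Set.Icc (0 : ℝ) 1)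
    (Rk : (Fin K → Fin d → ℝ) → ℝ)
    (hRk : ∀ μm : Fin K → Fin d → ℝ,
      Rk μm = ∫ x, ∑ a, ((G μm) {θ | ev θ x = a}).toReal * c x a ∂ν)
    (F : (Fin n → X × Fin K) → (Fin K → Fin d → ℝ) → ℝ)
    (hF : ∀ (ω : Fin n → X × Fin K) (μm : Fin K → Fin d → ℝ), F ω μm =
      (n : ℝ)⁻¹ * (∑ i, c (ω i).1 (ω i).2 * ((G μm) {θ | ev θ (ω i).1 = (ω i).2}).toReal
          / p0 (ω i).1 (ω i).2 ^ α)
        + Real.sqrt (((klDiv (G μm) (G μ0)).toReal + Real.log (4 * Real.sqrt n / δ))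
            / (2 * n))
        + (1 - (n : ℝ)⁻¹ * ∑ i, ∑ a,
            ((G μm) {θ | ev θ (ω i).1 = a}).toReal * p0 (ω i).1 a ^ (1 - α))
        + ((klDiv (G μm) (G μ0)).toReal + Real.log (4 / δ)) / (n * (Real.sqrt n)⁻¹)
        + (Real.sqrt n)⁻¹ / 2 * ((n : ℝ)⁻¹ * ∑ i,
            ((∑ a, p0 (ω i).1 a *
                (((G μm) {θ | ev θ (ω i).1 = a}).toReal / p0 (ω i).1 a ^ (2 * α)))
              + ((G μm) {θ | ev θ (ω i).1 = (ω i).2}).toReal * c (ω i).1 (ω i).2 ^ 2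
                  / p0 (ω i).1 (ω i).2 ^ (2 * α))))
    (μhat : (Fin n → X × Fin K) → Fin K → Fin d → ℝ)
    (hμhat : ∀ (ω : Fin n → X × Fin K) (μm : Fin K → Fin d → ℝ), F ω (μhat ω) ≤ F ω μm)
    (μstar : Fin K → Fin d → ℝ)
    (hμstar : ∀ μm : Fin K → Fin d → ℝ, Rk μstar ≤ Rk μm)
    (N2 : ℝ) (hN2 : N2 = ∑ a, ∑ j, (μstar a j - μ0 a j) ^ 2)
 :
    ENNReal.ofReal (1 - δ) ≤
      (Measure.pi fun _ : Fin n => ν ⊗ₘ κ0)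
        {ω | Rk (μhat ω) ≤ Rk μstar
          + Real.sqrt (N2 + 2 * Real.log (4 * Real.sqrt n / δ)) / Real.sqrt n
          + 2 * (1 - (K : ℝ) ^ (α - 1))
          + (N2 + 2 * Real.log (4 / δ)) / Real.sqrt n
          + ((K : ℝ) ^ (2 * α - 1) + (K : ℝ) ^ (2 * α)) / Real.sqrt n} := by
  have hk : (0 : ℝ) < K := by exact_mod_cast hK
  have hk1 : (1 : ℝ) ≤ K := by exact_mod_cast hK
  set k : ℝ := (K : ℝ) with hkdef
  set ρ : Measure (X × Fin K) := ν ⊗ₘ κ0 with hρ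
  have hGp : ∀ m, IsProbabilityMeasure (G m) := fun m => by rw [hG m]; infer_instance
  set L : ℝ := Real.log (4 / δ) with hLdef
  set L1 : ℝ := Real.log (4 * Real.sqrt n / δ) with hL1def
  set p : (Fin K → Fin d → ℝ) → X → Fin K → ℝ := fun m x a => ((G m) {θ | ev θ x = a}).toReal
    with hp
  have hevθ : ∀ x, Measurable fun θ => ev θ x := fun x => hev.comp measurable_prodMk_right
  have hevx : ∀ θ, Measurable fun x => ev θ x := fun θ => hev.comp measurable_prodMk_left
  have hset : ∀ x a, MeasurableSet {θ | ev θ x = a} := fun x a =>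
    hevθ x (measurableSet_singleton a)
  have hp0 : ∀ m x a, 0 ≤ p m x a := fun m x a => ENNReal.toReal_nonneg
  have hp1 : ∀ m x a, p m x a ≤ 1 := fun m x a => by
    have := hGp m
    exact measureReal_le_one (μ := G m) (s := {θ | ev θ x = a})
  -- integrals of indicators
  have hind : ∀ m x a (b : ℝ), ∫ θ, (if ev θ x = a then b else 0) ∂(G m) = p m x a * b := by
    intro m x a b
    have : (fun θ => if ev θ x = a then b else 0) =
        Set.indicator {θ | ev θ x = a} (fun _ => b) := by
      ext θ; simp [Set.indicator_apply]
    rw [this, integral_indicator_const _ (hset x a)]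
    rfl
  have hindi : ∀ m x a (b : ℝ), Integrable (fun θ => (if ev θ x = a then b else 0)) (G m) := by
    intro m x a b
    have := hGp m
    have : (fun θ => if ev θ x = a then b else 0) =
        Set.indicator {θ | ev θ x = a} (fun _ => b) := by
      ext θ; simp [Set.indicator_apply]
    rw [this]
    exact (integrable_const b).indicator (hset x a)
  have hpsum : ∀ m x (b : Fin K → ℝ), ∑ a, p m x a * b a = ∫ θ, b (ev θ x) ∂(G m) := by
    intro m x b
    simp_rw [← hind]
    rw [← integral_finsetSum _ (fun a _ => hindi m x a (b a))]
    simp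
  have hpone : ∀ m x, ∑ a, p m x a = 1 := by
    intro m x
    have := hGp m
    have h := hpsum m x (fun _ => 1)
    simpa using h
  have hcm : Measurable fun q : X × Fin K => c q.1 q.2 :=
    measurable_from_prod_countable_left hcmeas
  have hcabs : ∀ x a, |c x a| ≤ 1 := fun x a => by
    have := hc x a
    rw [abs_le]; exact ⟨this.1, this.2.trans zero_le_one⟩
  have hRlo : ∀ m, -1 ≤ Rk m := by
    intro m
    have := hGp m
    have h := norm_integral_le_of_norm_le_const (μ := ν) (f := fun x => ∑ a, p m x a * c x a)
      (C := 1) (Filter.Eventually.of_forall fun x => by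
        rw [hpsum]
        have := norm_integral_le_of_norm_le_const (μ := G m) (f := fun θ => c x (ev θ x))
          (C := 1) (Filter.Eventually.of_forall fun θ => hcabs _ _)
        simpa using this)
    rw [hRk]
    simp only [probReal_univ, mul_one, Real.norm_eq_abs] at h
    exact (abs_le.1 h).1
  have hRhi : ∀ m, Rk m ≤ 0 := by
    intro m
    rw [hRk]
    exact integral_nonpos fun x => Finset.sum_nonpos fun a _ =>
      mul_nonpos_of_nonneg_of_nonpos (hp0 m x a) (hc x a).2
  -- KL facts
  have hkl := fun m => gaussian_kl_aux m μ0 (G m) (G μ0) (hG m) (hG μ0)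
  have hklr : ∀ m, (klDiv (G m) (G μ0)).toReal = (∑ a, ∑ j, (m a j - μ0 a j) ^ 2) / 2 := by
    intro m
    obtain ⟨h1, h2, h3⟩ := hkl m
    rw [klDiv, if_pos ⟨h1, h2⟩, h3, ENNReal.toReal_ofReal]
    positivity
  -- the concentration step
  have key : ∀ t : ℝ, ∃ B : Set (Fin n → X × Fin K), MeasurableSet B ∧
      (Measure.pi fun _ : Fin n => ρ) B ≤ ENNReal.ofReal (δ / 4) ∧
      ∀ ω ∉ B, ∀ m, t * (∑ i, c (ω i).1 (ω i).2 * p m (ω i).1 (ω i).2)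
        - t ^ 2 / 2 * (∑ i, p m (ω i).1 (ω i).2 * c (ω i).1 (ω i).2 ^ 2)
        - n * (t / k * Rk m + t ^ 2 / k / 2) ≤ (klDiv (G m) (G μ0)).toReal + L := by
    intro t
    set g : X × Fin K → (Fin K → Fin d → ℝ) → ℝ :=
      fun z θ => if ev θ z.1 = z.2 then c z.1 z.2 else 0 with hg
    have hgm : Measurable fun q : (X × Fin K) × (Fin K → Fin d → ℝ) => g q.1 q.2 := by
      refine Measurable.ite ?_ (hcm.comp measurable_fst) measurable_const
      refine measurableSet_eq_fun (hev.comp (f := fun q : (X × Fin K) × (Fin K → Fin d → ℝ) =>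
        (q.2, q.1.1)) (by fun_prop)) (by fun_prop)
    have hgabs : ∀ z θ, |g z θ| ≤ 1 := by
      intro z θ
      simp only [hg]
      split_ifs
      · exact hcabs _ _
      · simp
    have hgz : ∀ θ, Measurable fun z => g z θ := fun θ => hgm.comp measurable_prodMk_right
    have hgi : ∀ θ, Integrable (fun z => g z θ) ρ := fun θ =>
      Integrable.of_bound (hgz θ).aestronglyMeasurable 1
        (Filter.Eventually.of_forall fun z => hgabs z θ)
    have hgsq : ∀ z θ, g z θ ^ 2 ≤ 1 := fun z θ => by
      rw [sq_le_one_iff_abs_le_one]; exact hgabs z θ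
    have hgi2 : ∀ θ, Integrable (fun z => g z θ ^ 2) ρ := fun θ =>
      Integrable.of_bound ((hgz θ).pow_const 2).aestronglyMeasurable 1
        (Filter.Eventually.of_forall fun z => by
          rw [Real.norm_eq_abs, abs_of_nonneg (sq_nonneg _)]; exact hgsq z θ)
    have hκr : ∀ x a, (κ0 x).real {a} = k⁻¹ := by
      intro x a
      rw [measureReal_def, hκ0, huniform, ENNReal.toReal_ofReal (by positivity)]
    have hge : ∀ θ, ∫ z, g z θ ∂ρ = k⁻¹ * ∫ x, c x (ev θ x) ∂ν := by
      intro θ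
      rw [hρ, Measure.integral_compProd (hgi θ), ← integral_const_mul]
      refine integral_congr_ae (Filter.Eventually.of_forall fun x => ?_)
      simp only
      rw [integral_fintype .of_finite]
      simp [hκr, hg]
    have hge2 : ∀ θ, ∫ z, g z θ ^ 2 ∂ρ ≤ k⁻¹ := by
      intro θ
      rw [hρ, Measure.integral_compProd (hgi2 θ)]
      have h : ∀ x, ∫ b, g (x, b) θ ^ 2 ∂(κ0 x) = k⁻¹ * c x (ev θ x) ^ 2 := by
        intro x
        rw [integral_fintype .of_finite]
        simp [hκr, hg, ite_pow]
      simp_rw [h]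
      have h2 := norm_integral_le_of_norm_le_const (μ := ν)
        (f := fun x => k⁻¹ * c x (ev θ x) ^ 2) (C := k⁻¹) (Filter.Eventually.of_forall fun x => by
          rw [Real.norm_eq_abs, abs_of_nonneg (by positivity)]
          exact mul_le_of_le_one_right (by positivity)
            (by rw [sq_le_one_iff_abs_le_one]; exact hcabs _ _))
      simp only [probReal_univ, mul_one, Real.norm_eq_abs] at h2
      exact (abs_le.1 h2).2
    have hgQ : ∀ m, ∫ θ, ∫ z, g z θ ∂ρ ∂(G m) = k⁻¹ * Rk m := by
      intro m
      have := hGp m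
      simp_rw [hge]
      rw [integral_const_mul, hRk, integral_integral_swap]
      · congr 1
        refine integral_congr_ae (Filter.Eventually.of_forall fun x => ?_)
        exact (hpsum m x (c x)).symm
      · refine Integrable.of_bound (Measurable.aestronglyMeasurable ?_) 1
          (Filter.Eventually.of_forall fun q => hcabs _ _)
        exact hcm.comp (f := fun q : (Fin K → Fin d → ℝ) × X => (q.2, ev q.1 q.2))
          (measurable_snd.prodMk hev)
    have := hGp μ0
    obtain ⟨B, hB1, hB2, hB3⟩ := pac_bayes_aux ρ (G μ0) n (fun z θ => t * g z θ)
      (hgm.const_mul t) |t| (fun z θ => by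
        rw [abs_mul]; exact mul_le_of_le_one_right (abs_nonneg t) (hgabs z θ))
      (t ^ 2 / k) (fun θ => by
        simp_rw [mul_pow]
        rw [integral_const_mul, div_eq_mul_inv]
        exact mul_le_mul_of_nonneg_left (hge2 θ) (sq_nonneg t)) (δ / 4) (by linarith [hδ.1])
    refine ⟨B, hB1, hB2, fun ω hω m => ?_⟩
    obtain ⟨h1, h2, h3⟩ := hkl m
    have h := hB3 ω hω (G m) (hGp m) h1 h2
    have hL' : Real.log (1 / (δ / 4)) = L := by
      rw [hLdef]; congr 1; field_simp
    rw [hL', h3, ← hklr m] at h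
    refine le_trans (le_of_eq ?_) h
    have e1 : ∫ θ, ∫ z, t * g z θ ∂ρ ∂(G m) = t / k * Rk m := by
      simp_rw [integral_const_mul]
      rw [hgQ]; ring
    have e2 : ∀ z : X × Fin K, ∫ θ, (t * g z θ - (t * g z θ) ^ 2 / 2) ∂(G m) =
        t * (c z.1 z.2 * p m z.1 z.2) - t ^ 2 / 2 * (p m z.1 z.2 * c z.1 z.2 ^ 2) := by
      intro z
      have : (fun θ => (t * g z θ - (t * g z θ) ^ 2 / 2)) = fun θ => if ev θ z.1 = z.2 then
          (t * c z.1 z.2 - (t * c z.1 z.2) ^ 2 / 2) else 0 := by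
        ext θ
        simp only [hg]
        split_ifs <;> simp
      rw [this, hind]
      ring
    rw [e1]
    simp_rw [e2]
    rw [Finset.sum_sub_distrib, ← Finset.mul_sum, ← Finset.mul_sum]
  -- normal form of `F`
  set s : ℝ := Real.sqrt n with hs
  have hn0 : (0 : ℝ) < n := by exact_mod_cast hn
  have hspos : 0 < s := Real.sqrt_pos.2 hn0
  have hs1 : 1 ≤ s := by rw [hs, Real.one_le_sqrt]; exact_mod_cast hn
  have hss : s ^ 2 = n := Real.sq_sqrt hn0.le
  set S : ℝ := k ^ α with hS
  have hSpos : 0 < S := Real.rpow_pos_of_pos hk α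
  have hS2 : k ^ (2 * α) = S ^ 2 := by
    rw [hS, mul_comm, Real.rpow_mul hk.le]; norm_cast
  have hS21 : k ^ (2 * α - 1) = S ^ 2 / k := by
    rw [Real.rpow_sub hk, hS2, Real.rpow_one]
  set T : ℝ := k ^ (α - 1) with hT
  have hTS : T = S / k := by rw [hT, Real.rpow_sub hk, Real.rpow_one]
  have hTpos : 0 < T := Real.rpow_pos_of_pos hk _
  have hT1 : T ≤ 1 := Real.rpow_le_one_of_one_le_of_nonpos hk1 (by linarith [hα.2])
  have hFn : ∀ ω m, F ω m = S * ((∑ i, c (ω i).1 (ω i).2 * p m (ω i).1 (ω i).2) / n)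
      + Real.sqrt (((klDiv (G m) (G μ0)).toReal + L1) / (2 * n)) + (1 - T)
      + ((klDiv (G m) (G μ0)).toReal + L) / s
      + (S ^ 2 / k + S ^ 2 * ((∑ i, p m (ω i).1 (ω i).2 * c (ω i).1 (ω i).2 ^ 2) / n))
          / (2 * s) := by
    intro ω m
    have q1 : (k⁻¹) ^ α = S⁻¹ := by rw [Real.inv_rpow hk.le]
    have q2 : (k⁻¹) ^ (2 * α) = (S ^ 2)⁻¹ := by rw [Real.inv_rpow hk.le, hS2]
    have q3 : (k⁻¹) ^ (1 - α) = T := by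
      rw [Real.inv_rpow hk.le, ← Real.rpow_neg hk.le, hT]; congr 1; ring
    rw [hF]
    simp only [huniform, q1, q2, q3]
    have f1 : ∑ i, c (ω i).1 (ω i).2 * ((G m) {θ | ev θ (ω i).1 = (ω i).2}).toReal / S⁻¹
        = S * ∑ i, c (ω i).1 (ω i).2 * p m (ω i).1 (ω i).2 := by
      rw [Finset.mul_sum]
      refine Finset.sum_congr rfl fun i _ => ?_
      rw [div_inv_eq_mul, mul_comm]
    have f2 : ∀ x, ∑ a, ((G m) {θ | ev θ x = a}).toReal * T = T := by
      intro x
      rw [← Finset.sum_mul]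
      have := hpone m x
      simp only [hp] at this
      rw [this, one_mul]
    have f3 : ∀ x, ∑ a, k⁻¹ * (((G m) {θ | ev θ x = a}).toReal / (S ^ 2)⁻¹) = S ^ 2 / k := by
      intro x
      rw [← Finset.mul_sum, ← Finset.sum_div]
      have := hpone m x
      simp only [hp] at this
      rw [this, one_div, inv_inv]; ring
    have f4 : ∑ i, (S ^ 2 / k + ((G m) {θ | ev θ (ω i).1 = (ω i).2}).toReal
          * c (ω i).1 (ω i).2 ^ 2 / (S ^ 2)⁻¹) = n * (S ^ 2 / k)
          + S ^ 2 * ∑ i, p m (ω i).1 (ω i).2 * c (ω i).1 (ω i).2 ^ 2 := by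
      rw [Finset.sum_add_distrib, Finset.mul_sum]
      congr 1
      · simp
      · refine Finset.sum_congr rfl fun i _ => ?_
        rw [div_inv_eq_mul, mul_comm]
    simp only [f1, f2, f3, f4]
    have hns : (n : ℝ) * s⁻¹ = s := by rw [← hss]; field_simp
    rw [hns]
    simp only [Finset.sum_const, Finset.card_univ, Fintype.card_fin, nsmul_eq_mul]
    field_simp
  obtain ⟨B1, hB1m, hB1, hB1'⟩ := key (-(S / s))
  obtain ⟨B2, hB2m, hB2, hB2'⟩ := key (S / s)
  have hL1 : 0 ≤ L1 := by
    refine Real.log_nonneg ?_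
    rw [le_div_iff₀ hδ.1]
    linarith [hδ.2]
  have hN0 : 0 ≤ N2 := by rw [hN2]; positivity
  have hklstar : (klDiv (G μstar) (G μ0)).toReal = N2 / 2 := by rw [hklr, hN2]
  have hgood : (B1 ∪ B2)ᶜ ⊆ {ω | Rk (μhat ω) ≤ Rk μstar
          + Real.sqrt (N2 + 2 * L1) / s + 2 * (1 - T) + (N2 + 2 * L) / s
          + (k ^ (2 * α - 1) + k ^ (2 * α)) / s} := by
    intro ω hω
    rw [Set.mem_compl_iff, Set.mem_union, not_or] at hω
    have hU := hB1' ω hω.1 (μhat ω)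
    have hV := hB2' ω hω.2 μstar
    have hmin := hμhat ω μstar
    rw [hFn, hFn, hklstar] at hmin
    rw [hklstar] at hV
    have hVle : (∑ i, p μstar (ω i).1 (ω i).2 * c (ω i).1 (ω i).2 ^ 2) / n ≤ 1 := by
      rw [div_le_one hn0]
      have : ∑ i : Fin n, p μstar (ω i).1 (ω i).2 * c (ω i).1 (ω i).2 ^ 2 ≤ ∑ i : Fin n, 1 :=
        Finset.sum_le_sum fun i _ => mul_le_one₀ (hp1 _ _ _) (sq_nonneg _)
          (by rw [sq_le_one_iff_abs_le_one]; exact hcabs _ _)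
      simpa using this
    change Rk (μhat ω) ≤ _
    rw [hS2, hS21]
    generalize (klDiv (G (μhat ω)) (G μ0)).toReal = H1 at *
    generalize hA1 : (∑ i, c (ω i).1 (ω i).2 * p (μhat ω) (ω i).1 (ω i).2) = A1 at *
    generalize hA2 : (∑ i, c (ω i).1 (ω i).2 * p μstar (ω i).1 (ω i).2) = A2 at *
    generalize hV1 : (∑ i, p (μhat ω) (ω i).1 (ω i).2 * c (ω i).1 (ω i).2 ^ 2) = V1 at *
    generalize hV2 : (∑ i, p μstar (ω i).1 (ω i).2 * c (ω i).1 (ω i).2 ^ 2) = V2 at *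
    have hR1 := hRhi (μhat ω)
    have hR2 := hRlo μstar
    generalize Rk (μhat ω) = R1 at *
    generalize Rk μstar = R2 at *
    have hsq : Real.sqrt ((N2 / 2 + L1) / (2 * n)) ≤ Real.sqrt (N2 + 2 * L1) / s := by
      rw [hs, ← Real.sqrt_div (by linarith)]
      refine Real.sqrt_le_sqrt ?_
      rw [div_le_div_iff₀ (by linarith) hn0]
      nlinarith
    have hsq0 := Real.sqrt_nonneg ((H1 + L1) / (2 * n))
    have hU' : T * R1 - S * (A1 / n) ≤ (H1 + L) / s
        + (S ^ 2 / k + S ^ 2 * (V1 / n)) / (2 * s) := by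
      have h := div_le_div_of_nonneg_right hU hspos.le
      rw [← hss] at h ⊢
      rw [hTS]
      refine le_trans (le_of_eq ?_) (add_le_add_left h
        ((S ^ 2 / k + S ^ 2 * (V1 / s ^ 2)) / (2 * s)))
      field_simp
      ring
    have hV' : S * (A2 / n) - T * R2 ≤ (N2 / 2 + L) / s
        + (S ^ 2 / k + S ^ 2 * (V2 / n)) / (2 * s) := by
      have h := div_le_div_of_nonneg_right hV hspos.le
      rw [← hss] at h ⊢
      rw [hTS]
      refine le_trans (le_of_eq ?_) (add_le_add_left h
        ((S ^ 2 / k + S ^ 2 * (V2 / s ^ 2)) / (2 * s)))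
      field_simp
      ring
    have hfin : (S ^ 2 / k + S ^ 2 * (V2 / n)) / (2 * s) ≤ (S ^ 2 / k + S ^ 2) / s / 2 := by
      rw [div_div, mul_comm 2 s]
      refine div_le_div_of_nonneg_right ?_ (by positivity)
      nlinarith [sq_nonneg S]
    have hH : (N2 + 2 * L) / s = 2 * ((N2 / 2 + L) / s) := by ring
    rw [hH]
    have hT1' : R1 ≤ T * R1 := by nlinarith
    have hT2' : T * R2 ≤ R2 + (1 - T) := by nlinarith
    linarith
  refine le_trans ?_ (measure_mono hgood)
  rw [prob_compl_eq_one_sub (hB1m.union hB2m), ENNReal.ofReal_sub _ hδ.1.le, ENNReal.ofReal_one]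
  refine tsub_le_tsub_left ((measure_union_le _ _).trans ((add_le_add hB1 hB2).trans ?_)) _
  rw [← ENNReal.ofReal_add (by linarith [hδ.1]) (by linarith [hδ.1])]
  exact ENNReal.ofReal_le_ofReal (by linarith [hδ.1])
end
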